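/- arXiv:math/9807077 — 3 statements merged into one kernel-verified Lean document; each statement's English description precedes it below -/
import Mathlib

section
/- Let V be a vertex operator algebra and W a weak V-module. Then D(W) is a g(V)-submodule of the g(V)-module W*, and D(W) is a restricted g(V)-module (i.e., for every v ∈ V and α ∈ D(W), v*_m α = 0 for m sufficiently large). -/
noncomputable section

/-- The generalized binomial coefficient `C(m, i)` for `m ∈ ℤ`, `i ∈ ℕ`,
as a complex number: `m(m-1)⋯(m-i+1)/i!`. -/
def cchoose (m : ℤ) (i : ℕ) : ℂ :=
  (∏ j ∈ Finset.range i, ((m : ℂ) - (j : ℂ))) / (Nat.factorial i : ℂ)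

/-- A vertex operator algebra `V = ⊕ₙ V₍ₙ₎` over `ℂ`.  The vertex operator map is
recorded through its modes `op u n v = uₙ v` (so `Y(u,x)v = Σₙ uₙv x^{-n-1}`), with
vacuum `one`, conformal vector `omega` (with `L(k) = ω_{k+1}`), central charge `cc`,
weight grading `wtSpace` with projections `proj`.  The Jacobi identity is recorded in
the equivalent form of the Borcherds identity on modes. -/
structure VOA where
  carrier : Type
  [grp : AddCommGroup carrier]
  [mdl : Module ℂ carrier]
  op : carrier → ℤ → carrier → carrier
  one : carrier
  omega : carrier
  wtSpace : ℤ → Submodule ℂ carrier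
  proj : ℤ → carrier → carrier
  cc : ℂ
  op_linear_left : ∀ (n : ℤ) (w : carrier), IsLinearMap ℂ fun u => op u n w
  op_linear_right : ∀ (u : carrier) (n : ℤ), IsLinearMap ℂ (op u n)
  trunc : ∀ u v : carrier, ∃ N : ℤ, ∀ n : ℤ, N ≤ n → op u n v = 0
  one_op : ∀ (n : ℤ) (v : carrier), op one n v = if n = -1 then v else 0
  create_nonneg : ∀ (v : carrier) (n : ℤ), 0 ≤ n → op v n one = 0
  create : ∀ v : carrier, op v (-1) one = v
  borcherds : ∀ (u v w : carrier) (l m n : ℤ),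
    (∑ᶠ i : ℕ, cchoose m i • op (op u (l + (i : ℤ)) v) (m + n - (i : ℤ)) w)
      = ∑ᶠ i : ℕ, ((-1 : ℂ) ^ i * cchoose l i) •
          (op u (l + m - (i : ℤ)) (op v (n + (i : ℤ)) w)
            - ((-1 : ℂ) ^ l) • op v (l + n - (i : ℤ)) (op u (m + (i : ℤ)) w))
  proj_linear : ∀ n : ℤ, IsLinearMap ℂ (proj n)
  proj_mem : ∀ (n : ℤ) (v : carrier), proj n v ∈ wtSpace n
  proj_eq : ∀ n : ℤ, ∀ v ∈ wtSpace n, proj n v = v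
  proj_ne : ∀ m n : ℤ, m ≠ n → ∀ v ∈ wtSpace m, proj n v = 0
  proj_finite : ∀ v : carrier, (Function.support fun n => proj n v).Finite
  proj_sum : ∀ v : carrier, (∑ᶠ n : ℤ, proj n v) = v
  fd : ∀ n : ℤ, FiniteDimensional ℂ (wtSpace n)
  lower_trunc : ∃ N : ℤ, ∀ n : ℤ, n < N → wtSpace n = ⊥
  one_wt : one ∈ wtSpace 0
  omega_wt : omega ∈ wtSpace 2
  op_wt : ∀ k m n : ℤ, ∀ u ∈ wtSpace k, ∀ v ∈ wtSpace m, op u n v ∈ wtSpace (k + m - n - 1)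
  L_zero : ∀ n : ℤ, ∀ v ∈ wtSpace n, op omega 1 v = (n : ℂ) • v
  L_neg_one : ∀ (u : carrier) (n : ℤ) (w : carrier),
    op (op omega 0 u) n w = (-(n : ℂ)) • op u (n - 1) w
  virasoro : ∀ (m n : ℤ) (v : carrier),
    op omega (m + 1) (op omega (n + 1) v) - op omega (n + 1) (op omega (m + 1) v)
      = ((m : ℂ) - (n : ℂ)) • op omega (m + n + 1) v
        + (if m + n = 0 then (((m : ℂ) ^ 3 - (m : ℂ)) / 12) * cc else 0) • v

attribute [instance] VOA.grp VOA.mdl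

namespace VOA

variable (V : VOA)

/-- The Virasoro operator `L(k) = ω_{k+1}`. -/
def L (k : ℤ) (v : V.carrier) : V.carrier := V.op V.omega (k + 1) v

/-- The positive-weight part `V₊ = ⊕_{n ≥ 1} V₍ₙ₎`. -/
def pos : Submodule ℂ V.carrier := ⨆ (n : ℤ) (_ : 1 ≤ n), V.wtSpace n

/-- Zhu's subspace `C₂(V) = span{u₋₂v : u, v ∈ V}`. -/
def C2 : Submodule ℂ V.carrier :=
  Submodule.span ℂ {x : V.carrier | ∃ u v : V.carrier, x = V.op u (-2) v}

/-- The subspace `C₁(V) = span(v₋₁V₊ (v ∈ V₊) together with L(-1)V)`. -/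
def C1 : Submodule ℂ V.carrier :=
  Submodule.span ℂ
    ({x : V.carrier | ∃ u ∈ V.pos, ∃ v ∈ V.pos, x = V.op u (-1) v}
      ∪ {x : V.carrier | ∃ v : V.carrier, x = V.op V.omega 0 v})

/-- Iterated application of modes: `iterApply [(u¹,n₁),…,(uʳ,n_r)] w = u¹_{n₁} ⋯ uʳ_{n_r} w`. -/
def iterApply : List (V.carrier × ℤ) → V.carrier → V.carrier
  | [], w => w
  | p :: l, w => V.op p.1 p.2 (iterApply l w)

/-- `U ⊆ V` generates `V` as a vertex operator algebra:  `V` is linearly spanned by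
the elements `u¹_{n₁} ⋯ uʳ_{n_r} 1` with `uⁱ ∈ U`, `n_i ∈ ℤ`. -/
def generates (U : Set V.carrier) : Prop :=
  Submodule.span ℂ {x : V.carrier | ∃ l : List (V.carrier × ℤ),
    (∀ p ∈ l, p.1 ∈ U) ∧ x = V.iterApply l V.one} = ⊤

/-- `V` is finitely generated as a vertex operator algebra. -/
def FinitelyGenerated : Prop := ∃ S : Finset V.carrier, V.generates ↑S

end VOA

/-- A weak `V`-module: all axioms of a module (truncation, vacuum, Jacobi identity in
Borcherds form) except those involving gradings. -/
structure WeakModule (V : VOA) where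
  carrier : Type
  [grp : AddCommGroup carrier]
  [mdl : Module ℂ carrier]
  op : V.carrier → ℤ → carrier → carrier
  op_linear_left : ∀ (n : ℤ) (w : carrier), IsLinearMap ℂ fun u => op u n w
  op_linear_right : ∀ (u : V.carrier) (n : ℤ), IsLinearMap ℂ (op u n)
  trunc : ∀ (u : V.carrier) (w : carrier), ∃ N : ℤ, ∀ n : ℤ, N ≤ n → op u n w = 0
  one_op : ∀ (n : ℤ) (w : carrier), op V.one n w = if n = -1 then w else 0
  borcherds : ∀ (u v : V.carrier) (w : carrier) (l m n : ℤ),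
    (∑ᶠ i : ℕ, cchoose m i • op (V.op u (l + (i : ℤ)) v) (m + n - (i : ℤ)) w)
      = ∑ᶠ i : ℕ, ((-1 : ℂ) ^ i * cchoose l i) •
          (op u (l + m - (i : ℤ)) (op v (n + (i : ℤ)) w)
            - ((-1 : ℂ) ^ l) • op v (l + n - (i : ℤ)) (op u (m + (i : ℤ)) w))

attribute [instance] WeakModule.grp WeakModule.mdl

namespace WeakModule

variable {V : VOA} (W : WeakModule V)

/-- `L(0)` acting on a weak module, as a linear map. -/
def L0 : W.carrier →ₗ[ℂ] W.carrier := IsLinearMap.mk' _ (W.op_linear_right V.omega 1)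

/-- The `L(0)`-eigenspace of eigenvalue `h`. -/
def eig (h : ℂ) : Submodule ℂ W.carrier :=
  LinearMap.ker (W.L0 - h • (LinearMap.id : W.carrier →ₗ[ℂ] W.carrier))

/-- The coefficient `v*ₙ` of the adjoint vertex operator
`⟨Y*(v,x)α, w⟩ = ⟨α, Y(e^{xL(1)}(-x^{-2})^{L(0)}v, x^{-1})w⟩` acting on the full dual
space: for `v` homogeneous of weight `h`,
`(v*ₙ α)(w) = (-1)^h Σ_{i≥0} (1/i!) α((L(1)^i v)_{2h-n-i-2} w)`, extended to general
`v` via the weight-space projections. -/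
def dmode (v : V.carrier) (n : ℤ) (α : W.carrier → ℂ) (w : W.carrier) : ℂ :=
  ∑ᶠ h : ℤ, ∑ᶠ i : ℕ,
    ((-1 : ℂ) ^ h / (Nat.factorial i : ℂ)) *
      α (W.op ((V.L 1)^[i] (V.proj h v)) (2 * h - n - (i : ℤ) - 2) w)

/-- `D(W) ⊆ W*`: the linear functionals `α` on `W` such that for every `v ∈ V`,
`Y*(v,x)α ∈ W*((x))`, i.e. `v*ₙ α = 0` for `n` sufficiently large. -/
def DW : Set (W.carrier → ℂ) :=
  {α | IsLinearMap ℂ α ∧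
    ∀ v : V.carrier, ∃ N : ℤ, ∀ n : ℤ, N ≤ n → ∀ w : W.carrier, W.dmode v n α w = 0}

/-- A subspace stable under all modes of all vertex operators, i.e. a `V`-submodule. -/
def IsStable (S : Submodule ℂ W.carrier) : Prop :=
  ∀ (v : V.carrier) (n : ℤ), ∀ m ∈ S, W.op v n m ∈ S

/-- An irreducible (nonzero, no proper nonzero stable subspaces) `V`-submodule. -/
def IsIrreducibleSub (S : Submodule ℂ W.carrier) : Prop :=
  S ≠ ⊥ ∧ W.IsStable S ∧
    ∀ T : Submodule ℂ W.carrier, W.IsStable T → T ≤ S → T = ⊥ ∨ T = S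

/-- A stable subspace which is an ordinary module: `L(0)` acts semisimply on it with
finite-dimensional eigenspaces, and for each `h` the eigenvalues `h + m` do not occur
for `m` a sufficiently negative integer. -/
def IsOrdinarySub (S : Submodule ℂ W.carrier) : Prop :=
  S ≤ (⨆ h : ℂ, W.eig h ⊓ S) ∧ (∀ h : ℂ, FiniteDimensional ℂ ↥(W.eig h ⊓ S)) ∧
    ∀ h : ℂ, ∃ N : ℤ, ∀ m : ℤ, m ≤ N → W.eig (h + (m : ℂ)) ⊓ S = ⊥

/-- The weak module `W` is irreducible. -/
def IsIrreducible : Prop :=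
  (⊥ : Submodule ℂ W.carrier) ≠ ⊤ ∧
    ∀ S : Submodule ℂ W.carrier, W.IsStable S → S = ⊥ ∨ S = ⊤

/-- `Cₙ(W) = span{v₋ₙw : v ∈ V, w ∈ W}`. -/
def Cn (n : ℤ) : Submodule ℂ W.carrier :=
  Submodule.span ℂ {x : W.carrier | ∃ (v : V.carrier) (w : W.carrier), x = W.op v (-n) w}

/-- `B(W) = span(u₋₁W (u ∈ V₊) together with v₀W (v homogeneous, wt v ≥ 2))`. -/
def BW : Submodule ℂ W.carrier :=
  Submodule.span ℂ
    ({x : W.carrier | ∃ v ∈ V.pos, ∃ w : W.carrier, x = W.op v (-1) w}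
      ∪ {x : W.carrier | ∃ k : ℤ, 2 ≤ k ∧ ∃ v ∈ V.wtSpace k, ∃ w : W.carrier, x = W.op v 0 w})

/-- Zhu's subspace `O(W) = span{Σ_{i≥0} C(wt v, i) v_{i-2} w}` so that `A(W) = W/O(W)`. -/
def OW : Submodule ℂ W.carrier :=
  Submodule.span ℂ
    {x : W.carrier | ∃ (k : ℤ) (v : V.carrier), v ∈ V.wtSpace k ∧
      ∃ w : W.carrier, x = ∑ᶠ i : ℕ, cchoose k i • W.op v ((i : ℤ) - 2) w}

/-- A subspace `T ⊇ O(W)` of `W` is closed under the Frenkel–Zhu left and right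
`A(V)`-actions `v * w = Σᵢ C(wt v, i) v_{i-1} w` and `w * v = Σᵢ C(wt v - 1, i) v_{i-1} w`;
for `T ⊇ O(W)` this expresses that `T/O(W)` is an `A(V)`-sub-bimodule of `A(W)`. -/
def BimoduleClosed (T : Submodule ℂ W.carrier) : Prop :=
  ∀ k : ℤ, ∀ v ∈ V.wtSpace k, ∀ w ∈ T,
    (∑ᶠ i : ℕ, cchoose k i • W.op v ((i : ℤ) - 1) w) ∈ T ∧
    (∑ᶠ i : ℕ, cchoose (k - 1) i • W.op v ((i : ℤ) - 1) w) ∈ T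

/-- Equivalence (isomorphism) of weak modules. -/
def Equiv (M N : WeakModule V) : Prop :=
  ∃ e : M.carrier ≃ₗ[ℂ] N.carrier,
    ∀ (v : V.carrier) (n : ℤ) (w : M.carrier), e (M.op v n w) = N.op v n (e w)

end WeakModule

/-- `V` is of class 𝒜: `L(0)` acts semisimply on every weak `V`-module. -/
def VOA.classA (V : VOA) : Prop :=
  ∀ M : WeakModule V, (⨆ h : ℂ, M.eig h) = ⊤

/-- `V` is regular: every weak `V`-module is a direct sum of irreducible ordinary
`V`-modules. -/
def VOA.regular (V : VOA) : Prop :=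
  ∀ M : WeakModule V, ∃ (ι : Type) (S : ι → Submodule ℂ M.carrier),
    (∀ i, M.IsIrreducibleSub (S i) ∧ M.IsOrdinarySub (S i)) ∧
    (∀ i, Disjoint (S i) (⨆ (j : ι) (_ : j ≠ i), S j)) ∧ (⨆ i, S i) = ⊤

/-- A generalized `V`-module: a weak module with a semisimple `L(0)`-action, graded by
the `L(0)`-eigenvalues, with weight-space projections `projW`. -/
structure GenModule (V : VOA) extends WeakModule V where
  wt : ℂ → Submodule ℂ carrier
  projW : ℂ → carrier → carrier
  projW_linear : ∀ h : ℂ, IsLinearMap ℂ (projW h)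
  projW_mem : ∀ (h : ℂ) (w : carrier), projW h w ∈ wt h
  projW_eq : ∀ h : ℂ, ∀ w ∈ wt h, projW h w = w
  projW_ne : ∀ g h : ℂ, g ≠ h → ∀ w ∈ wt g, projW h w = 0
  projW_finite : ∀ w : carrier, (Function.support fun h => projW h w).Finite
  projW_sum : ∀ w : carrier, (∑ᶠ h : ℂ, projW h w) = w
  wt_L0 : ∀ h : ℂ, ∀ w ∈ wt h, op V.omega 1 w = h • w
  wt_op : ∀ k : ℤ, ∀ v ∈ V.wtSpace k, ∀ (h : ℂ) (n : ℤ), ∀ w ∈ wt h,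
    op v n w ∈ wt (h + (k : ℂ) - (n : ℂ) - 1)

/-- An ordinary `V`-module: a generalized module whose weight spaces are
finite-dimensional and whose weights are truncated from below in each coset `h + ℤ`. -/
structure OrdModule (V : VOA) extends GenModule V where
  wt_fd : ∀ h : ℂ, FiniteDimensional ℂ ↥(wt h)
  wt_lower : ∀ h : ℂ, ∃ N : ℤ, ∀ m : ℤ, m ≤ N → wt (h + (m : ℂ)) = ⊥

namespace GenModule

variable {V : VOA} (W : GenModule V)

/-- `W₊ = ⊕_{Re h > 0} W₍ₕ₎`. -/
def posW : Submodule ℂ W.carrier := ⨆ (h : ℂ) (_ : 0 < h.re), W.wt h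

/-- `C₁(W) = span(v₋₁W₊ (v ∈ V₊) together with L(-1)W)`. -/
def C1W : Submodule ℂ W.carrier :=
  Submodule.span ℂ
    ({x : W.carrier | ∃ v ∈ V.pos, ∃ w ∈ W.posW, x = W.op v (-1) w}
      ∪ {x : W.carrier | ∃ w : W.carrier, x = W.op V.omega 0 w})

/-- The restricted dual `W' = ⊕ₕ W₍ₕ₎* ⊆ W*`: the linear functionals vanishing on all
but finitely many weight spaces. -/
def restrictedDual : Set (W.carrier → ℂ) :=
  {α | IsLinearMap ℂ α ∧ {h : ℂ | ∃ w ∈ W.wt h, α w ≠ 0}.Finite}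

end GenModule

/-- `D(W)⁰`: the sum of the `L(0)`-eigenspaces of the weak module `D(W) ⊆ W*`, where
`L*(0) = ω*₁` acts on `α ∈ W*` by `(L*(0)α)(w) = α(L(0)w)`. -/
def OrdModule.DW0 {V : VOA} (W : OrdModule V) : Set (W.carrier → ℂ) :=
  {α | ∃ (S : Finset ℂ) (f : ℂ → (W.carrier → ℂ)),
    (∀ h ∈ S, f h ∈ W.toWeakModule.DW ∧
      ∀ w : W.carrier, f h (W.op V.omega 1 w) = h * f h w) ∧
    α = ∑ h ∈ S, f h}

/-- An ℕ-gradable weak `V`-module: a weak module with an ℕ-grading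
`W = ⊕_{n∈ℕ} W(n)` with `v_m W(n) ⊆ W(wt v + n - m - 1)` (graded pieces of negative
index are zero). -/
structure NGradedModule (V : VOA) extends WeakModule V where
  gr : ℤ → Submodule ℂ carrier
  gr_neg : ∀ n : ℤ, n < 0 → gr n = ⊥
  gr_sup : (⨆ n : ℤ, gr n) = ⊤
  gr_indep : ∀ n : ℤ, Disjoint (gr n) (⨆ (m : ℤ) (_ : m ≠ n), gr m)
  gr_op : ∀ k : ℤ, ∀ v ∈ V.wtSpace k, ∀ m n : ℤ, ∀ w ∈ gr n,
    op v m w ∈ gr (k + n - m - 1)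

/-- An intertwining operator of type `(W₃; W₁ W₂)` in the sense of
Frenkel–Huang–Lepowsky, recorded through its complex-indexed modes
`I w₁ h w₂ = (w₁)ₕ w₂` (so `Y(w₁,x)w₂ = Σ_{h∈ℂ} (w₁)ₕ w₂ x^{-h-1}`):
linearity, truncation, the `L(-1)`-derivative property, and the Jacobi identity in
component (Borcherds) form. -/
def IsIntertwiner {V : VOA} (W1 W2 W3 : OrdModule V)
    (I : W1.carrier → ℂ → W2.carrier → W3.carrier) : Prop :=
  (∀ (h : ℂ) (w2 : W2.carrier), IsLinearMap ℂ fun w1 => I w1 h w2) ∧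
  (∀ (w1 : W1.carrier) (h : ℂ), IsLinearMap ℂ (I w1 h)) ∧
  (∀ (w1 : W1.carrier) (w2 : W2.carrier) (h : ℂ),
    ∃ N : ℤ, ∀ n : ℤ, N ≤ n → I w1 (h + (n : ℂ)) w2 = 0) ∧
  (∀ (w1 : W1.carrier) (h : ℂ) (w2 : W2.carrier),
    I (W1.op V.omega 0 w1) h w2 = (-h) • I w1 (h - 1) w2) ∧
  (∀ (u : V.carrier) (w1 : W1.carrier) (w2 : W2.carrier) (l m : ℤ) (h : ℂ),
    (∑ᶠ i : ℕ, cchoose m i • I (W1.op u (l + (i : ℤ)) w1) ((m : ℂ) + h - (i : ℂ)) w2)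
      = ∑ᶠ i : ℕ, ((-1 : ℂ) ^ i * cchoose l i) •
          (W3.op u (l + m - (i : ℤ)) (I w1 (h + (i : ℂ)) w2)
            - ((-1 : ℂ) ^ l) • I w1 ((l : ℂ) + h - (i : ℂ)) (W2.op u (m + (i : ℤ)) w2)))

/-- The fusion rule `dim I(W₃; W₁W₂)` is finite: the space of intertwining operators of
the indicated type is finite-dimensional. -/
def FusionFinite {V : VOA} (W1 W2 W3 : OrdModule V) : Prop :=
  FiniteDimensional ℂ
    ↥(Submodule.span ℂ {I : W1.carrier → ℂ → W2.carrier → W3.carrier |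
        IsIntertwiner W1 W2 W3 I})

end

open Filter in
/-- The condition `α ∘ v_n = 0` for `n` sufficiently negative. -/
def WeakModule.Van {V : VOA} (W : WeakModule V) (α : W.carrier → ℂ) (v : V.carrier) : Prop :=
  ∀ᶠ n : ℤ in atBot, ∀ w : W.carrier, α (W.op v n w) = 0

/-- Linear functionals `α` with `α ∘ v_n = 0` for `n` sufficiently negative, for all `v`. -/
def WeakModule.PW {V : VOA} (W : WeakModule V) : Submodule ℂ (W.carrier → ℂ) where
  carrier := {α | IsLinearMap ℂ α ∧ ∀ v, W.Van α v}
  add_mem' := by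
    rintro a b ⟨ha, ha'⟩ ⟨hb, hb'⟩
    refine ⟨⟨fun x y => ?_, fun c x => ?_⟩, fun v => ?_⟩
    · simp only [Pi.add_apply, ha.map_add, hb.map_add]; ring
    · simp only [Pi.add_apply, ha.map_smul, hb.map_smul, smul_add]
    · filter_upwards [ha' v, hb' v] with n h1 h2 w
      simp [h1 w, h2 w]
  zero_mem' := by
    refine ⟨⟨fun x y => ?_, fun c x => ?_⟩, fun v => ?_⟩
    · simp
    · simp
    · exact Filter.Eventually.of_forall (fun n w => rfl)
  smul_mem' := by
    rintro c a ⟨ha, ha'⟩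
    refine ⟨⟨fun x y => ?_, fun d x => ?_⟩, fun v => ?_⟩
    · simp only [Pi.smul_apply, ha.map_add, smul_add]
    · simp only [Pi.smul_apply, ha.map_smul, smul_eq_mul]; ring
    · filter_upwards [ha' v] with n h1 w
      simp [h1 w]

lemma VOA.iter_wt (V : VOA) (h : ℤ) (v : V.carrier) (hv : v ∈ V.wtSpace h) (i : ℕ) :
    (V.L 1)^[i] v ∈ V.wtSpace (h - i) := by
  induction i with
  | zero => simpa using hv
  | succ k ih =>
    rw [Function.iterate_succ_apply']
    have := V.op_wt 2 (h - k) (1 + 1) V.omega V.omega_wt _ ih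
    have e : (2 + (h - (k : ℤ)) - (1 + 1) - 1) = h - ((k + 1 : ℕ) : ℤ) := by push_cast; ring
    rw [e] at this
    exact this

lemma VOA.iter_zero (V : VOA) (h : ℤ) :
    ∃ K : ℕ, ∀ v ∈ V.wtSpace h, ∀ i : ℕ, K ≤ i → (V.L 1)^[i] v = 0 := by
  obtain ⟨N, hN⟩ := V.lower_trunc
  refine ⟨(h - N + 1).toNat, fun v hv i hi => ?_⟩
  have := V.iter_wt h v hv i
  rw [hN (h - i) (by omega)] at this
  simpa using this

lemma WeakModule.op_zero_left {V : VOA} (W : WeakModule V) (n : ℤ) (w : W.carrier) :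
    W.op 0 n w = 0 := (W.op_linear_left n w).map_zero

lemma WeakModule.dmode_inner {V : VOA} (W : WeakModule V) (α : W.carrier → ℂ)
    (hα : IsLinearMap ℂ α) (h n : ℤ) (v : V.carrier) (K : ℕ)
    (hK : ∀ i : ℕ, K ≤ i → (V.L 1)^[i] v = 0) (w : W.carrier) :
    (∑ᶠ i : ℕ, ((-1 : ℂ) ^ h / (Nat.factorial i : ℂ)) *
      α (W.op ((V.L 1)^[i] v) (2 * h - n - (i : ℤ) - 2) w))
    = ∑ i ∈ Finset.range K, ((-1 : ℂ) ^ h / (Nat.factorial i : ℂ)) *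
      α (W.op ((V.L 1)^[i] v) (2 * h - n - (i : ℤ) - 2) w) := by
  apply finsum_eq_sum_of_support_subset
  intro i hi
  by_contra hc
  apply hi
  have : K ≤ i := by simpa using hc
  simp [hK i this, W.op_zero_left, hα.map_zero]

lemma VOA.proj_homog (V : VOA) (h g : ℤ) (v : V.carrier) (hv : v ∈ V.wtSpace h) :
    V.proj g v = if g = h then v else 0 := by
  split_ifs with e
  · subst e; exact V.proj_eq _ v hv
  · exact V.proj_ne h g (fun e' => e e'.symm) v hv

lemma VOA.iter_L_zero (V : VOA) (i : ℕ) : (V.L 1)^[i] (0 : V.carrier) = 0 := by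
  induction i with
  | zero => rfl
  | succ k ih =>
    rw [Function.iterate_succ_apply', ih]
    exact (V.op_linear_right V.omega (1 + 1)).map_zero

lemma WeakModule.dmode_homog {V : VOA} (W : WeakModule V) (α : W.carrier → ℂ)
    (hα : IsLinearMap ℂ α) (h n : ℤ) (v : V.carrier) (hv : v ∈ V.wtSpace h) (w : W.carrier) :
    W.dmode v n α w = ∑ᶠ i : ℕ, ((-1 : ℂ) ^ h / (Nat.factorial i : ℂ)) *
      α (W.op ((V.L 1)^[i] v) (2 * h - n - (i : ℤ) - 2) w) := by
  unfold WeakModule.dmode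
  rw [finsum_eq_single _ h]
  · rw [V.proj_eq h v hv]
  · intro g hg
    rw [V.proj_homog h g v hv, if_neg hg]
    simp [V.iter_L_zero, W.op_zero_left, hα.map_zero]

lemma WeakModule.dmode_general {V : VOA} (W : WeakModule V) (v : V.carrier) :
    ∃ (S : Finset ℤ) (K : ℤ → ℕ), ∀ α : W.carrier → ℂ, IsLinearMap ℂ α → ∀ n : ℤ,
      W.dmode v n α = ∑ h ∈ S, ∑ i ∈ Finset.range (K h),
        ((-1 : ℂ) ^ h / (Nat.factorial i : ℂ)) •
        (fun w => α (W.op ((V.L 1)^[i] (V.proj h v)) (2 * h - n - (i : ℤ) - 2) w)) := by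
  choose K hK using V.iter_zero
  refine ⟨(V.proj_finite v).toFinset, K, fun α hα n => ?_⟩
  funext w
  simp only [Finset.sum_apply, Pi.smul_apply, smul_eq_mul]
  unfold WeakModule.dmode
  rw [finsum_eq_sum_of_support_subset (s := (V.proj_finite v).toFinset)]
  · refine Finset.sum_congr rfl fun h _ => ?_
    exact W.dmode_inner α hα h n _ (K h) (hK h _ (V.proj_mem h v)) w
  · intro h hh
    by_contra hc
    apply hh
    have : V.proj h v = 0 := by simpa using hc
    simp [this, V.iter_L_zero, W.op_zero_left, hα.map_zero]

lemma tendsto_sub_atBot (c : ℤ) : Filter.Tendsto (fun n : ℤ => c - n) Filter.atTop Filter.atBot := by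
  refine Filter.tendsto_atBot.2 fun b => ?_
  filter_upwards [Filter.eventually_ge_atTop (c - b)] with n hn
  omega

lemma tendsto_sub_atTop (c : ℤ) : Filter.Tendsto (fun n : ℤ => c - n) Filter.atBot Filter.atTop := by
  refine Filter.tendsto_atTop.2 fun b => ?_
  filter_upwards [Filter.eventually_le_atBot (c - b)] with n hn
  omega

lemma WeakModule.mem_DW_of_PW {V : VOA} (W : WeakModule V) (α : W.carrier → ℂ)
    (h : α ∈ W.PW) : α ∈ W.DW := by
  obtain ⟨hα, hv⟩ := h
  refine ⟨hα, fun v => ?_⟩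
  obtain ⟨S, K, hS⟩ := W.dmode_general v
  rw [← Filter.eventually_atTop (p := fun n : ℤ => ∀ w : W.carrier, W.dmode v n α w = 0)]
  have key : ∀ᶠ n : ℤ in Filter.atTop, ∀ h ∈ S, ∀ i ∈ Finset.range (K h), ∀ w,
      α (W.op ((V.L 1)^[i] (V.proj h v)) (2 * h - n - (i : ℤ) - 2) w) = 0 := by
    rw [Filter.eventually_all_finset]
    intro h _
    rw [Filter.eventually_all_finset]
    intro i _
    have := (tendsto_sub_atBot (2 * h - i - 2)).eventually (hv ((V.L 1)^[i] (V.proj h v)))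
    filter_upwards [this] with n hn w
    rw [show 2 * h - n - (i : ℤ) - 2 = 2 * h - i - 2 - n by ring]
    exact hn w
  filter_upwards [key] with n hn w
  rw [hS α hα n]
  simp only [Finset.sum_apply, Pi.smul_apply, smul_eq_mul]
  refine Finset.sum_eq_zero fun h hh => Finset.sum_eq_zero fun i hi => ?_
  rw [hn h hh i hi w, mul_zero]

lemma WeakModule.van_homog {V : VOA} (W : WeakModule V) (α : W.carrier → ℂ)
    (h : α ∈ W.DW) (N : ℤ) (hN : ∀ n : ℤ, n < N → V.wtSpace n = ⊥) (k : ℕ) :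
    ∀ h : ℤ, h < N + k → ∀ v ∈ V.wtSpace h, W.Van α v := by
  obtain ⟨hα, hD⟩ := h
  induction k with
  | zero =>
    intro h hh v hv
    rw [hN h (by simpa using hh)] at hv
    have : v = 0 := by simpa using hv
    subst this
    exact Filter.Eventually.of_forall fun n w => by rw [W.op_zero_left, hα.map_zero]
  | succ k ih =>
    intro h hh v hv
    obtain ⟨K, hK⟩ := V.iter_zero h
    have h1 := Filter.eventually_atTop.2 (hD v)
    have h2 : ∀ᶠ n : ℤ in Filter.atBot, ∀ i ∈ Finset.range K, ∀ w,
        α (W.op ((V.L 1)^[i + 1] v) (n - ((i + 1 : ℕ) : ℤ)) w) = 0 := by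
      rw [Filter.eventually_all_finset]
      intro i _
      have := ih (h - ((i + 1 : ℕ) : ℤ)) (by push_cast at hh ⊢; omega) _ (V.iter_wt h v hv (i + 1))
      exact (Filter.tendsto_atBot_add_const_right _ (-((i + 1 : ℕ) : ℤ)) Filter.tendsto_id).eventually
        this
    have h3 := (tendsto_sub_atTop (2 * h - 2)).eventually h1
    unfold WeakModule.Van
    filter_upwards [h2, h3] with n hn2 hn3 w
    have e := hn3 w
    rw [W.dmode_homog α hα h _ v hv w,
      W.dmode_inner α hα h _ v (K + 1) (fun i hi => hK v hv i (by omega)) w,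
      Finset.sum_range_succ', Finset.sum_eq_zero, zero_add] at e
    · simp only [Function.iterate_zero, id_eq, Nat.factorial_zero, Nat.cast_one, div_one,
        Nat.cast_zero] at e
      rw [show 2 * h - (2 * h - 2 - n) - 0 - 2 = n by ring] at e
      rcases mul_eq_zero.1 e with e | e
      · exact absurd e (zpow_ne_zero _ (by norm_num))
      · exact e
    · intro i hi
      rw [show 2 * h - (2 * h - 2 - n) - ((i + 1 : ℕ) : ℤ) - 2 = n - ((i + 1 : ℕ) : ℤ) by ring,
        hn2 i hi w, mul_zero]

lemma WeakModule.mem_PW_of_DW {V : VOA} (W : WeakModule V) (α : W.carrier → ℂ)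
    (h : α ∈ W.DW) : α ∈ W.PW := by
  have hα := h.1
  refine ⟨hα, fun v => ?_⟩
  obtain ⟨N, hN⟩ := V.lower_trunc
  have hh : ∀ g : ℤ, W.Van α (V.proj g v) := fun g =>
    W.van_homog α h N hN (g - N + 1).toNat g (by omega) _ (V.proj_mem g v)
  have key : ∀ᶠ n : ℤ in Filter.atBot, ∀ g ∈ (V.proj_finite v).toFinset, ∀ w,
      α (W.op (V.proj g v) n w) = 0 := by
    rw [Filter.eventually_all_finset]
    exact fun g _ => hh g
  unfold WeakModule.Van
  filter_upwards [key] with n hn w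
  have e : ∑ g ∈ (V.proj_finite v).toFinset, V.proj g v = v := by
    rw [← finsum_eq_sum _ (V.proj_finite v)]
    exact V.proj_sum v
  have e2 : α (W.op v n w) = ((IsLinearMap.mk' α hα).comp
      (IsLinearMap.mk' _ (W.op_linear_left n w))) v := rfl
  rw [e2, ← e, map_sum]
  exact Finset.sum_eq_zero fun g hg => hn g hg w

lemma cchoose_zero_succ (i : ℕ) (hi : i ≠ 0) : cchoose 0 i = 0 := by
  unfold cchoose
  rw [Finset.prod_eq_zero (i := 0)]
  · simp
  · simp; omega
  · simp

lemma WeakModule.commutator {V : VOA} (W : WeakModule V) (u v : V.carrier) (m n : ℤ)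
    (w : W.carrier) :
    W.op u m (W.op v n w) = W.op v n (W.op u m w) +
      ∑ᶠ i : ℕ, cchoose m i • W.op (V.op u (i : ℤ) v) (m + n - (i : ℤ)) w := by
  have := W.borcherds u v w 0 m n
  rw [finsum_eq_single (fun i : ℕ => ((-1 : ℂ) ^ i * cchoose 0 i) • _) 0] at this
  · simp only [zero_add] at this
    rw [this]
    simp [cchoose]
  · intro i hi
    rw [cchoose_zero_succ i hi]; simp

lemma WeakModule.comp_mem {V : VOA} (W : WeakModule V) (α : W.carrier → ℂ)
    (h : α ∈ W.PW) (u : V.carrier) (m : ℤ) : (fun w => α (W.op u m w)) ∈ W.PW := by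
  obtain ⟨hα, hv⟩ := h
  refine ⟨((IsLinearMap.mk' α hα).comp (IsLinearMap.mk' _ (W.op_linear_right u m))).isLinear,
    fun v => ?_⟩
  obtain ⟨K, hK⟩ := V.trunc u v
  have key : ∀ᶠ n : ℤ in Filter.atBot, ∀ i ∈ Finset.range K.toNat, ∀ w,
      α (W.op (V.op u (i : ℤ) v) (m + n - (i : ℤ)) w) = 0 := by
    rw [Filter.eventually_all_finset]
    intro i _
    have := (Filter.tendsto_atBot_add_const_left Filter.atBot (m - (i : ℤ))
      Filter.tendsto_id).eventually (hv (V.op u (i : ℤ) v))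
    filter_upwards [this] with n hn w
    rw [show m + n - (i : ℤ) = m - i + n by ring]
    exact hn w
  unfold WeakModule.Van
  filter_upwards [key, hv v] with n hn hn' w
  rw [W.commutator, finsum_eq_sum_of_support_subset (s := Finset.range K.toNat), hα.map_add, hn',
    zero_add]
  · have e2 : ∀ x, α x = IsLinearMap.mk' α hα x := fun _ => rfl
    rw [e2, map_sum]
    refine Finset.sum_eq_zero fun i hi => ?_
    rw [map_smul, ← e2, hn i hi w, smul_zero]
  · intro i hi
    by_contra hc
    apply hi
    have : K ≤ i := by simpa using hc
    simp [hK i this, W.op_zero_left]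

/-- `D(W)` is a `g(V)`-submodule of the `g(V)`-module `W*`
(it is a linear subspace stable under all the operators `v*ₙ`), and `D(W)` is a
restricted `g(V)`-module: for every `v ∈ V` and `α ∈ D(W)`, `v*ₙ α = 0` for `n`
sufficiently large. -/
theorem DW_restricted_gV_submodule (V : VOA) (W : WeakModule V) :
    (∀ α ∈ W.DW, ∀ β ∈ W.DW, α + β ∈ W.DW) ∧
    (∀ c : ℂ, ∀ α ∈ W.DW, c • α ∈ W.DW) ∧
    (∀ α ∈ W.DW, ∀ (v : V.carrier) (n : ℤ), W.dmode v n α ∈ W.DW) ∧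
    (∀ α ∈ W.DW, ∀ v : V.carrier, ∃ N : ℤ, ∀ n : ℤ, N ≤ n →
      ∀ w : W.carrier, W.dmode v n α w = 0) := by
  have hP : ∀ α, α ∈ W.DW ↔ α ∈ W.PW := fun α => ⟨W.mem_PW_of_DW α, W.mem_DW_of_PW α⟩
  refine ⟨fun α ha β hb => ?_, fun c α ha => ?_, fun α ha v n => ?_, fun α ha v => ha.2 v⟩
  · rw [hP] at *
    exact W.PW.add_mem ha hb
  · rw [hP] at *
    exact W.PW.smul_mem c ha
  · obtain ⟨S, K, hS⟩ := W.dmode_general v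
    rw [hS α ha.1 n, hP]
    rw [hP] at ha
    exact W.PW.sum_mem fun h _ => W.PW.sum_mem fun i _ =>
      W.PW.smul_mem _ (W.comp_mem α ha _ _)
end

section
/- Let V be a vertex operator algebra and W a weak V-module. Then (D(W), Y*) is itself a weak V-module; moreover it is the maximal weak V-module contained in W* with vertex operator map Y*. -/
theorem cch_zero (m : ℤ) : cchoose m 0 = 1 := by simp [cchoose]

theorem cch_succ (m : ℤ) (i : ℕ) :
    ((i : ℂ) + 1) * cchoose m (i + 1) = ((m : ℂ) - i) * cchoose m i := by
  unfold cchoose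
  rw [Finset.prod_range_succ, Nat.factorial_succ]
  have h1 : (Nat.factorial i : ℂ) ≠ 0 := by exact_mod_cast Nat.factorial_ne_zero i
  have h2 : ((i : ℂ) + 1) ≠ 0 := by exact_mod_cast Nat.succ_ne_zero i
  push_cast
  field_simp

theorem cch_pascal (m : ℤ) (i : ℕ) :
    cchoose (m + 1) (i + 1) = cchoose m (i + 1) + cchoose m i := by
  induction i with
  | zero =>
    have h1 := cch_succ (m + 1) 0
    have h2 := cch_succ m 0
    simp only [cch_zero] at *
    push_cast at *
    linear_combination h1 - h2
  | succ i ih =>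
    have h0 : ((i : ℂ) + 1 + 1) ≠ 0 := by exact_mod_cast Nat.succ_ne_zero (i + 1)
    have h1 := cch_succ (m + 1) (i + 1)
    have h2 := cch_succ m (i + 1)
    have h3 := cch_succ m i
    push_cast at *
    apply mul_left_cancel₀ h0
    rw [ih] at h1
    linear_combination h1 - h2 - h3

theorem cch_zero_succ (i : ℕ) : cchoose 0 (i + 1) = 0 := by
  simp [cchoose, Finset.prod_range_succ']

/-- Auxiliary sum for the Vandermonde-type identity. -/
theorem cch_vand_step (X m : ℤ) (I : ℕ) :
    (∑ p ∈ Finset.HasAntidiagonal.antidiagonal (I + 1), (-1 : ℂ) ^ p.1 * cchoose (m + 1) p.1 * cchoose (X - p.1) p.2)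
     = (∑ p ∈ Finset.HasAntidiagonal.antidiagonal (I + 1), (-1 : ℂ) ^ p.1 * cchoose m p.1 * cchoose (X - p.1) p.2)
      - ∑ p ∈ Finset.HasAntidiagonal.antidiagonal I, (-1 : ℂ) ^ p.1 * cchoose m p.1 * cchoose (X - 1 - p.1) p.2 := by
  rw [Finset.Nat.sum_antidiagonal_succ, Finset.Nat.sum_antidiagonal_succ, add_sub_assoc,
    ← Finset.sum_sub_distrib]
  refine congrArg₂ (· + ·) ?_ ?_
  · simp [cch_zero]
  · refine Finset.sum_congr rfl fun p _ => ?_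
    rw [cch_pascal]
    have : X - ((p.1 + 1 : ℕ) : ℤ) = X - 1 - p.1 := by push_cast; ring
    rw [this]; ring

theorem cch_vand (I : ℕ) : ∀ (X m : ℤ),
    (∑ p ∈ Finset.HasAntidiagonal.antidiagonal I, (-1 : ℂ) ^ p.1 * cchoose m p.1 * cchoose (X - p.1) p.2)
     = cchoose (X - m) I := by
  induction I with
  | zero => intro X m; simp [cch_zero]
  | succ I ih =>
    intro X m
    have step : ∀ m : ℤ, cchoose (X - (m + 1)) (I + 1)
        = cchoose (X - m) (I + 1) - cchoose (X - 1 - m) I := by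
      intro m
      have := cch_pascal (X - (m + 1)) I
      have e : X - (m + 1) + 1 = X - m := by ring
      have e2 : X - 1 - m = X - (m + 1) := by ring
      rw [e] at this
      rw [this, e2]; ring
    induction m using Int.induction_on with
    | zero =>
      rw [Finset.Nat.sum_antidiagonal_succ]
      simp [cch_zero, cch_zero_succ]
    | succ m hm => rw [cch_vand_step, hm, ih, step]
    | pred m hm =>
      have h1 := cch_vand_step X (-(m : ℤ) - 1) I
      have h2 := step (-(m : ℤ) - 1)
      rw [ih] at h1
      rw [sub_add_cancel] at h1 h2
      rw [hm] at h1
      linear_combination h2 - h1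

/-- Linear-map version of the Virasoro operator `L(1)`. -/
noncomputable def VOA.opL (V : VOA) (n : ℤ) : V.carrier →ₗ[ℂ] V.carrier →ₗ[ℂ] V.carrier :=
  LinearMap.mk₂ ℂ (fun u w => V.op u n w)
    (fun a b w => (V.op_linear_left n w).map_add a b)
    (fun c a w => (V.op_linear_left n w).map_smul c a)
    (fun a w w' => (V.op_linear_right a n).map_add w w')
    (fun c a w => (V.op_linear_right a n).map_smul c w)

noncomputable def WeakModule.opL {V : VOA} (W : WeakModule V) (n : ℤ) :
    V.carrier →ₗ[ℂ] W.carrier →ₗ[ℂ] W.carrier :=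
  LinearMap.mk₂ ℂ (fun u w => W.op u n w)
    (fun a b w => (W.op_linear_left n w).map_add a b)
    (fun c a w => (W.op_linear_left n w).map_smul c a)
    (fun a w w' => (W.op_linear_right a n).map_add w w')
    (fun c a w => (W.op_linear_right a n).map_smul c w)

theorem VOA.opL_apply (V : VOA) (n : ℤ) (u w : V.carrier) : V.opL n u w = V.op u n w := rfl
theorem WeakModule.opL_apply {V : VOA} (W : WeakModule V) (n : ℤ) (u : V.carrier)
    (w : W.carrier) : W.opL n u w = W.op u n w := rfl

noncomputable def VOA.L1 (V : VOA) : V.carrier →ₗ[ℂ] V.carrier := V.opL 2 V.omega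

theorem VOA.L1_apply (V : VOA) (v : V.carrier) : V.L1 v = V.op V.omega 2 v := rfl

theorem VOA.L_one_iter (V : VOA) (i : ℕ) (v : V.carrier) : (V.L 1)^[i] v = (V.L1 ^ i) v := by
  rw [Module.End.pow_apply]; rfl

theorem VOA.L1_pow_succ (V : VOA) (i : ℕ) (v : V.carrier) :
    (V.L1 ^ (i + 1)) v = V.L1 ((V.L1 ^ i) v) := by
  rw [pow_succ', Module.End.mul_apply]

theorem VOA.L1_pow_mem (V : VOA) (h : ℤ) (v : V.carrier) (hv : v ∈ V.wtSpace h) (i : ℕ) :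
    (V.L1 ^ i) v ∈ V.wtSpace (h - i) := by
  induction i with
  | zero => simpa using hv
  | succ i ih =>
    rw [V.L1_pow_succ]
    have := V.op_wt 2 (h - i) 2 _ V.omega_wt _ ih
    have e : 2 + (h - (i : ℤ)) - 2 - 1 = h - ((i + 1 : ℕ) : ℤ) := by push_cast; ring
    rw [e] at this
    exact this

theorem VOA.L1_comm (V : VOA) (p r : ℤ) (u w : V.carrier) (hu : u ∈ V.wtSpace p) :
    V.L1 (V.op u r w) = V.op (V.L1 u) r w + ((2 * p - r - 2 : ℤ) : ℂ) • V.op u (r + 1) w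
      + V.op u r (V.L1 w) := by
  have hb := V.borcherds V.omega u w 0 2 r
  have c0 : ∀ i : ℕ, i ∉ Finset.range 1 → cchoose 0 i = 0 := by
    intro i hi
    obtain ⟨j, rfl⟩ : ∃ j, i = j + 1 := ⟨i - 1, by simp at hi; omega⟩
    exact cch_zero_succ j
  have c2 : ∀ i : ℕ, i ∉ Finset.range 3 → cchoose 2 i = 0 := by
    intro i hi
    simp only [Finset.mem_range, not_lt] at hi
    unfold cchoose
    rw [Finset.prod_eq_zero (i := 2) (by simp; omega) (by norm_num)]
    simp
  rw [finsum_eq_sum_of_support_subset (s := Finset.range 3) _ (by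
      intro i hi
      by_contra h
      exact hi (by simp only [c2 i h, zero_smul])),
    finsum_eq_sum_of_support_subset (s := Finset.range 1) _ (by
      intro i hi
      by_contra h
      exact hi (by simp only [c0 i h, mul_zero, zero_smul]))] at hb
  have e1 : cchoose 2 1 = 2 := by simp [cchoose]
  have e2 : cchoose 2 2 = 1 := by norm_num [cchoose, Finset.prod_range_succ]
  simp only [Finset.sum_range_succ, Finset.sum_range_zero, cch_zero, e1, e2] at hb
  norm_num at hb
  have e3 : (2 : ℤ) + r - 1 = r + 1 := by ring
  have e6 : V.op ((p : ℂ) • u) (r + 1) w = (p : ℂ) • V.op u (r + 1) w :=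
    (V.op_linear_left (r + 1) w).map_smul _ _
  rw [V.L_neg_one, V.L_zero p u hu, e3, e6] at hb
  rw [V.L1_apply, V.L1_apply, V.L1_apply, ← sub_eq_iff_eq_add, ← hb]
  push_cast
  module

/-- Sum over all triples `(i,j,k)` of natural numbers with `i + j + k = d`. -/
def tsum3 {M : Type} [AddCommGroup M] (d : ℕ) (f : ℕ → ℕ → ℕ → M) : M :=
  ∑ p ∈ Finset.HasAntidiagonal.antidiagonal d,
    ∑ q ∈ Finset.HasAntidiagonal.antidiagonal p.2, f p.1 q.1 q.2

theorem tsum3_congr {M : Type} [AddCommGroup M] (d : ℕ) (f g : ℕ → ℕ → ℕ → M)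
    (h : ∀ i j k, i + j + k = d → f i j k = g i j k) : tsum3 d f = tsum3 d g := by
  unfold tsum3
  refine Finset.sum_congr rfl fun p hp => Finset.sum_congr rfl fun q hq => ?_
  rw [Finset.HasAntidiagonal.mem_antidiagonal] at hp hq
  exact h _ _ _ (by omega)

theorem tsum3_add {M : Type} [AddCommGroup M] (d : ℕ) (f g : ℕ → ℕ → ℕ → M) :
    tsum3 d (fun i j k => f i j k + g i j k) = tsum3 d f + tsum3 d g := by
  simp [tsum3, Finset.sum_add_distrib]

theorem tsum3_map {M N : Type} [AddCommGroup M] [AddCommGroup N] [Module ℂ M] [Module ℂ N]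
    (L : M →ₗ[ℂ] N) (d : ℕ) (f : ℕ → ℕ → ℕ → M) :
    L (tsum3 d f) = tsum3 d (fun i j k => L (f i j k)) := by
  simp [tsum3, map_sum]

theorem tsum3_smul {M : Type} [AddCommGroup M] [Module ℂ M]
    (c : ℂ) (d : ℕ) (f : ℕ → ℕ → ℕ → M) :
    c • (tsum3 d f) = tsum3 d (fun i j k => c • f i j k) := by
  simp [tsum3, Finset.smul_sum]

theorem tsum3_shift1 {M : Type} [AddCommGroup M] (d : ℕ) (f : ℕ → ℕ → ℕ → M)
    (h : ∀ j k, f 0 j k = 0) :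
    tsum3 (d + 1) f = tsum3 d (fun i j k => f (i + 1) j k) := by
  unfold tsum3
  rw [Finset.Nat.sum_antidiagonal_succ]
  simp [h]

theorem tsum3_shift2 {M : Type} [AddCommGroup M] (d : ℕ) (f : ℕ → ℕ → ℕ → M)
    (h : ∀ i k, f i 0 k = 0) :
    tsum3 (d + 1) f = tsum3 d (fun i j k => f i (j + 1) k) := by
  unfold tsum3
  rw [Finset.Nat.sum_antidiagonal_succ']
  simp [h, Finset.Nat.sum_antidiagonal_succ]

theorem tsum3_shift3 {M : Type} [AddCommGroup M] (d : ℕ) (f : ℕ → ℕ → ℕ → M)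
    (h : ∀ i j, f i j 0 = 0) :
    tsum3 (d + 1) f = tsum3 d (fun i j k => f i j (k + 1)) := by
  unfold tsum3
  rw [Finset.Nat.sum_antidiagonal_succ']
  simp [h, Finset.Nat.sum_antidiagonal_succ']

theorem abstract_pow {M : Type} [AddCommGroup M] [Module ℂ M] (L : M →ₗ[ℂ] M)
    (A : ℕ → ℕ → ℕ → M) (X : ℤ)
    (hA : ∀ i j k : ℕ, L (A i j k) = ((k : ℂ) + 1) • A i j (k + 1)
      + ((X : ℂ) - 2 * k - i) • A (i + 1) j k + ((j : ℂ) + 1) • A i (j + 1) k) (d : ℕ) :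
    (L ^ d) (A 0 0 0) =
      (Nat.factorial d : ℂ) • tsum3 d (fun i j k => cchoose (X - k) i • A i j k) := by
  induction d with
  | zero => simp [tsum3, cch_zero]
  | succ d ih =>
    rw [pow_succ', Module.End.mul_apply, ih, map_smul, tsum3_map]
    have h1 : tsum3 (d + 1) (fun i j k => ((k : ℂ) * cchoose (X - k + 1) i) • A i j k)
        = tsum3 d (fun i j k => (cchoose (X - k) i * (k + 1)) • A i j (k + 1)) := by
      rw [tsum3_shift3 _ _ (by simp)]
      refine tsum3_congr _ _ _ fun i j k _ => ?_
      have : X - ((k + 1 : ℕ) : ℤ) + 1 = X - k := by push_cast; ring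
      rw [this]; push_cast; rw [mul_comm]
    have h2 : tsum3 (d + 1) (fun i j k => ((i : ℂ) * cchoose (X - k) i
          - k * (cchoose (X - k + 1) i - cchoose (X - k) i)) • A i j k)
        = tsum3 d (fun i j k => (cchoose (X - k) i * (X - 2 * k - i)) • A (i + 1) j k) := by
      rw [tsum3_shift1 _ _ (by simp [cch_zero])]
      refine tsum3_congr _ _ _ fun i j k _ => ?_
      congr 1
      have a1 := cch_succ (X - k) i
      have a2 := cch_pascal (X - k) i
      push_cast at *
      rw [a2]
      linear_combination a1
    have h3 : tsum3 (d + 1) (fun i j k => ((j : ℂ) * cchoose (X - k) i) • A i j k)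
        = tsum3 d (fun i j k => (cchoose (X - k) i * (j + 1)) • A i (j + 1) k) := by
      rw [tsum3_shift2 _ _ (by simp)]
      refine tsum3_congr _ _ _ fun i j k _ => ?_
      push_cast; rw [mul_comm]
    have h4 : tsum3 d (fun i j k => L (cchoose (X - k) i • A i j k))
        = tsum3 d (fun i j k => (cchoose (X - k) i * (k + 1)) • A i j (k + 1)
          + (cchoose (X - k) i * (X - 2 * k - i)) • A (i + 1) j k
          + (cchoose (X - k) i * (j + 1)) • A i (j + 1) k) := by
      refine tsum3_congr _ _ _ fun i j k _ => ?_
      rw [map_smul, hA]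
      module
    rw [h4, tsum3_add, tsum3_add, ← h1, ← h2, ← h3, ← tsum3_add, ← tsum3_add,
      Nat.factorial_succ, Nat.cast_mul, mul_comm, mul_smul, tsum3_smul (((d + 1 : ℕ) : ℂ))]
    congr 1
    refine tsum3_congr _ _ _ fun i j k h => ?_
    rw [← h]
    push_cast
    module

/-- The terms appearing in the expansion of `L(1)^d (u_l v)`. -/
noncomputable def VOA.term (V : VOA) (u v : V.carrier) (l : ℤ) (i j k : ℕ) : V.carrier :=
  ((Nat.factorial j : ℂ)⁻¹ * (Nat.factorial k : ℂ)⁻¹) •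
    V.op ((V.L1 ^ k) u) (l + i) ((V.L1 ^ j) v)

theorem VOA.L1_pow_op (V : VOA) (p l : ℤ) (u v : V.carrier) (hu : u ∈ V.wtSpace p) (d : ℕ) :
    (Nat.factorial d : ℂ)⁻¹ • (V.L1 ^ d) (V.op u l v) =
      tsum3 d (fun i j k => cchoose (2 * p - l - 2 - k) i • V.term u v l i j k) := by
  have h := abstract_pow V.L1 (V.term u v l) (2 * p - l - 2) (by
    intro i j k
    have hj : (Nat.factorial j : ℂ) ≠ 0 := by exact_mod_cast Nat.factorial_ne_zero j
    have hk : (Nat.factorial k : ℂ) ≠ 0 := by exact_mod_cast Nat.factorial_ne_zero k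
    have hj' : (j : ℂ) + 1 ≠ 0 := by exact_mod_cast Nat.succ_ne_zero j
    have hk' : (k : ℂ) + 1 ≠ 0 := by exact_mod_cast Nat.succ_ne_zero k
    unfold VOA.term
    rw [map_smul, V.L1_comm (p - k) _ _ _ (V.L1_pow_mem p u hu k), ← V.L1_pow_succ,
      ← V.L1_pow_succ, smul_add, smul_add, smul_smul, smul_smul, smul_smul, smul_smul]
    have e : l + (i : ℤ) + 1 = l + ((i + 1 : ℕ) : ℤ) := by push_cast; ring
    rw [e]
    refine congrArg₂ (· + ·) (congrArg₂ (· + ·) ?_ ?_) ?_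
    · congr 1
      rw [Nat.factorial_succ]; push_cast; field_simp
    · congr 1
      push_cast; ring
    · congr 1
      rw [Nat.factorial_succ]; push_cast; field_simp) d
  have hd : (Nat.factorial d : ℂ) ≠ 0 := by exact_mod_cast Nat.factorial_ne_zero d
  have e0 : V.term u v l 0 0 0 = V.op u l v := by simp [VOA.term]
  rw [e0] at h
  rw [h, smul_smul, inv_mul_cancel₀ hd, one_smul]

theorem ad_assoc {M : Type} [AddCommGroup M] (d : ℕ) (F : ℕ → ℕ → ℕ → M) :
    (∑ p ∈ Finset.HasAntidiagonal.antidiagonal d,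
      ∑ q ∈ Finset.HasAntidiagonal.antidiagonal p.2, F p.1 q.1 q.2)
    = ∑ p ∈ Finset.HasAntidiagonal.antidiagonal d,
      ∑ q ∈ Finset.HasAntidiagonal.antidiagonal p.1, F q.1 q.2 p.2 := by
  rw [Finset.sum_sigma', Finset.sum_sigma']
  refine Finset.sum_nbij' (fun x => ⟨(x.1.1 + x.2.1, x.2.2), (x.1.1, x.2.1)⟩)
    (fun x => ⟨(x.2.1, x.2.2 + x.1.2), (x.2.2, x.1.2)⟩) ?_ ?_ ?_ ?_ ?_
  · rintro ⟨⟨a, b⟩, ⟨c, e⟩⟩ h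
    simp only [Finset.mem_sigma, Finset.HasAntidiagonal.mem_antidiagonal, and_true] at *
    omega
  · rintro ⟨⟨a, b⟩, ⟨c, e⟩⟩ h
    simp only [Finset.mem_sigma, Finset.HasAntidiagonal.mem_antidiagonal, and_true] at *
    omega
  · rintro ⟨⟨a, b⟩, ⟨c, e⟩⟩ h
    simp only [Finset.mem_sigma, Finset.HasAntidiagonal.mem_antidiagonal] at *
    rw [h.2]
  · rintro ⟨⟨a, b⟩, ⟨c, e⟩⟩ h
    simp only [Finset.mem_sigma, Finset.HasAntidiagonal.mem_antidiagonal] at *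
    rw [h.2]
  · rintro ⟨⟨a, b⟩, ⟨c, e⟩⟩ h
    rfl

theorem sum_assoc3 {M : Type} [AddCommGroup M] (d : ℕ) (f : ℕ → ℕ → ℕ → ℕ → M) :
    (∑ p ∈ Finset.HasAntidiagonal.antidiagonal d, tsum3 p.2 (f p.1))
     = tsum3 d (fun I j k => ∑ x ∈ Finset.HasAntidiagonal.antidiagonal I, f x.1 x.2 j k) := by
  unfold tsum3
  rw [ad_assoc d (fun a b c => ∑ q ∈ Finset.HasAntidiagonal.antidiagonal c, f a b q.1 q.2)]
  refine Finset.sum_congr rfl fun p _ => ?_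
  rw [Finset.sum_comm]

theorem VOA.key (V : VOA) (p l m : ℤ) (u v : V.carrier) (hu : u ∈ V.wtSpace p) (d : ℕ) :
    (∑ x ∈ Finset.HasAntidiagonal.antidiagonal d,
      ((-1 : ℂ) ^ x.1 * cchoose m x.1 * (Nat.factorial x.2 : ℂ)⁻¹) •
        (V.L1 ^ x.2) (V.op u (l + x.1) v))
    = tsum3 d (fun i j k => cchoose (2 * p - l - m - k - 2) i • V.term u v l i j k) := by
  have h1 : ∀ x ∈ Finset.HasAntidiagonal.antidiagonal d,
      ((-1 : ℂ) ^ x.1 * cchoose m x.1 * (Nat.factorial x.2 : ℂ)⁻¹) •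
        (V.L1 ^ x.2) (V.op u (l + x.1) v)
      = tsum3 x.2 (fun a j k => ((-1 : ℂ) ^ x.1 * cchoose m x.1 *
          cchoose (2 * p - l - k - 2 - x.1) a) • V.term u v l (x.1 + a) j k) := by
    intro x _
    rw [mul_smul, V.L1_pow_op p _ u v hu, tsum3_smul]
    refine tsum3_congr _ _ _ fun i j k _ => ?_
    rw [smul_smul]
    have e1 : 2 * p - (l + x.1) - 2 - (k : ℤ) = 2 * p - l - k - 2 - x.1 := by ring
    have e2 : V.term u v (l + x.1) i j k = V.term u v l (x.1 + i) j k := by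
      unfold VOA.term; push_cast; rw [add_assoc]
    rw [e1, e2]
  rw [Finset.sum_congr rfl h1, sum_assoc3 d (fun x a j k => ((-1 : ℂ) ^ x * cchoose m x *
          cchoose (2 * p - l - k - 2 - x) a) • V.term u v l (x + a) j k)]
  refine tsum3_congr _ _ _ fun i j k _ => ?_
  have e : 2 * p - l - m - k - 2 = 2 * p - l - k - 2 - m := by ring
  rw [e, ← cch_vand, Finset.sum_smul]
  refine Finset.sum_congr rfl fun x hx => ?_
  rw [Finset.HasAntidiagonal.mem_antidiagonal] at hx
  rw [hx]

theorem range_ad {M : Type} [AddCommGroup M] (N : ℕ) (f : ℕ → ℕ → M)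
    (h : ∀ i s, N ≤ i + s → f i s = 0) :
    (∑ i ∈ Finset.range N, ∑ s ∈ Finset.range N, f i s)
      = ∑ d ∈ Finset.range N, ∑ p ∈ Finset.HasAntidiagonal.antidiagonal d, f p.1 p.2 := by
  rw [← Finset.sum_product', Finset.sum_sigma']
  symm
  refine Finset.sum_of_injOn (fun x => x.2) ?_ ?_ ?_ ?_
  · rintro ⟨d, a, b⟩ h1 ⟨d', a', b'⟩ h2 h3
    simp only [Finset.coe_sigma, Set.mem_sigma_iff, Finset.mem_coe,
      Finset.HasAntidiagonal.mem_antidiagonal, Prod.mk.injEq] at *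
    obtain ⟨rfl, rfl⟩ := h3
    obtain ⟨_, rfl⟩ := h1
    obtain ⟨_, rfl⟩ := h2
    rfl
  · rintro ⟨d, a, b⟩ h1
    simp only [Finset.coe_sigma, Set.mem_sigma_iff, Finset.mem_coe, Finset.mem_range,
      Finset.HasAntidiagonal.mem_antidiagonal, Finset.mem_product] at *
    omega
  · rintro ⟨a, b⟩ _ h2
    apply h
    by_contra hlt
    apply h2
    refine ⟨⟨a + b, a, b⟩, ?_, rfl⟩
    simp only [Finset.coe_sigma, Set.mem_sigma_iff, Finset.mem_coe, Finset.mem_range,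
      Finset.HasAntidiagonal.mem_antidiagonal, and_true]
    omega
  · intros; rfl

theorem range_tsum3 {M : Type} [AddCommGroup M] (N : ℕ) (f : ℕ → ℕ → ℕ → M)
    (h : ∀ i j k, N ≤ i + j + k → f i j k = 0) :
    (∑ i ∈ Finset.range N, ∑ j ∈ Finset.range N, ∑ k ∈ Finset.range N, f i j k)
      = ∑ d ∈ Finset.range N, tsum3 d f := by
  have h1 : ∀ i, (∑ j ∈ Finset.range N, ∑ k ∈ Finset.range N, f i j k)
      = ∑ d ∈ Finset.range N, ∑ p ∈ Finset.HasAntidiagonal.antidiagonal d, f i p.1 p.2 :=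
    fun i => range_ad N (f i) fun j k hjk => h i j k (by omega)
  simp only [h1]
  rw [range_ad N (fun i d => ∑ p ∈ Finset.HasAntidiagonal.antidiagonal d, f i p.1 p.2)]
  · rfl
  · intro i s his
    refine Finset.sum_eq_zero fun p hp => h _ _ _ ?_
    rw [Finset.HasAntidiagonal.mem_antidiagonal] at hp
    omega

theorem VOA.hom_induction (V : VOA) (P : V.carrier → Prop)
    (hh : ∀ h : ℤ, ∀ v ∈ V.wtSpace h, P v) (hadd : ∀ u v, P u → P v → P (u + v))
    (v : V.carrier) : P v := by
  rw [← V.proj_sum v]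
  exact finsum_induction P (hh 0 0 (Submodule.zero_mem _)) hadd
    (fun h => hh h _ (V.proj_mem h v))

theorem VOA.exists_bound (V : VOA) : ∃ B : ℤ, ∀ n : ℤ, n < B → ∀ v ∈ V.wtSpace n, v = 0 := by
  obtain ⟨B, hB⟩ := V.lower_trunc
  exact ⟨B, fun n hn v hv => by rw [hB n hn] at hv; simpa using hv⟩

theorem VOA.L1_nilp (V : VOA) (h : ℤ) (v : V.carrier) (hv : v ∈ V.wtSpace h) :
    ∃ S : ℕ, ∀ s : ℕ, S ≤ s → (V.L1 ^ s) v = 0 := by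
  obtain ⟨B, hB⟩ := V.exists_bound
  refine ⟨(h - B + 1).toNat, fun s hs => hB (h - s) ?_ _ (V.L1_pow_mem h v hv s)⟩
  omega

/-- The opposite mode operators `v^o_n` on a weak module. -/
noncomputable def WeakModule.opp {V : VOA} (W : WeakModule V) (v : V.carrier) (n : ℤ) :
    W.carrier →ₗ[ℂ] W.carrier :=
  ∑ᶠ h : ℤ, ∑ᶠ i : ℕ, ((-1 : ℂ) ^ h / (Nat.factorial i : ℂ)) •
    W.opL (2 * h - n - (i : ℤ) - 2) ((V.L1 ^ i) (V.proj h v))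

theorem WeakModule.opp_fin1 {V : VOA} (W : WeakModule V) (v : V.carrier) (n h : ℤ) :
    (Function.support fun i : ℕ => ((-1 : ℂ) ^ h / (Nat.factorial i : ℂ)) •
      W.opL (2 * h - n - (i : ℤ) - 2) ((V.L1 ^ i) (V.proj h v))).Finite := by
  obtain ⟨S, hS⟩ := V.L1_nilp h _ (V.proj_mem h v)
  refine (Set.finite_lt_nat S).subset fun i hi => ?_
  by_contra hlt
  apply hi
  simp only [Set.mem_ofPred_eq, not_lt] at hlt
  simp [hS i hlt]

theorem WeakModule.opp_fin2 {V : VOA} (W : WeakModule V) (v : V.carrier) (n : ℤ) :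
    (Function.support fun h : ℤ => ∑ᶠ i : ℕ, ((-1 : ℂ) ^ h / (Nat.factorial i : ℂ)) •
      W.opL (2 * h - n - (i : ℤ) - 2) ((V.L1 ^ i) (V.proj h v))).Finite := by
  refine (V.proj_finite v).subset fun h hh => ?_
  intro h0
  apply hh
  simp [h0]

theorem WeakModule.opp_add {V : VOA} (W : WeakModule V) (u v : V.carrier) (n : ℤ) :
    W.opp (u + v) n = W.opp u n + W.opp v n := by
  unfold WeakModule.opp
  rw [← finsum_add_distrib (W.opp_fin2 u n) (W.opp_fin2 v n)]
  refine finsum_congr fun h => ?_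
  rw [← finsum_add_distrib (W.opp_fin1 u n h) (W.opp_fin1 v n h)]
  refine finsum_congr fun i => ?_
  rw [(V.proj_linear h).map_add, map_add, map_add, smul_add]

theorem WeakModule.opp_hom {V : VOA} (W : WeakModule V) (q : ℤ) (v : V.carrier)
    (hv : v ∈ V.wtSpace q) (n : ℤ) (S : ℕ) (hS : ∀ s : ℕ, S ≤ s → (V.L1 ^ s) v = 0) :
    W.opp v n = ∑ i ∈ Finset.range S, ((-1 : ℂ) ^ q / (Nat.factorial i : ℂ)) •
      W.opL (2 * q - n - (i : ℤ) - 2) ((V.L1 ^ i) v) := by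
  unfold WeakModule.opp
  rw [finsum_eq_single _ q]
  · rw [V.proj_eq q v hv]
    apply finsum_eq_sum_of_support_subset
    intro i hi
    by_contra hlt
    simp only [Finset.coe_range, Set.mem_Iio, not_lt] at hlt
    apply hi
    simp [hS i hlt]
  · intro h hq
    simp [V.proj_ne q h hq.symm v hv]

theorem WeakModule.dmode_eq {V : VOA} (W : WeakModule V) (v : V.carrier) (n : ℤ)
    (α : W.carrier →ₗ[ℂ] ℂ) (w : W.carrier) : W.dmode v n α w = α (W.opp v n w) := by
  let ev : (W.carrier →ₗ[ℂ] W.carrier) →ₗ[ℂ] ℂ := α ∘ₗ LinearMap.applyₗ w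
  have : α (W.opp v n w) = ev.toAddMonoidHom (W.opp v n) := rfl
  rw [this]
  unfold WeakModule.opp WeakModule.dmode
  rw [AddMonoidHom.map_finsum _ (W.opp_fin2 v n)]
  refine finsum_congr fun h => ?_
  rw [AddMonoidHom.map_finsum _ (W.opp_fin1 v n h)]
  refine finsum_congr fun i => ?_
  rw [V.L_one_iter]
  change _ = ev (_ • _)
  rw [map_smul]
  rfl

theorem WeakModule.dmode_eq_fun {V : VOA} (W : WeakModule V) (v : V.carrier) (n : ℤ)
    (α : W.carrier →ₗ[ℂ] ℂ) : W.dmode v n α = (α ∘ₗ W.opp v n : W.carrier →ₗ[ℂ] ℂ) := by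
  funext w
  rw [W.dmode_eq]; rfl

theorem WeakModule.opp_trunc {V : VOA} (W : WeakModule V) (v : V.carrier) (w : W.carrier) :
    ∃ K : ℤ, ∀ k : ℤ, k ≤ K → W.opp v k w = 0 := by
  induction v using V.hom_induction with
  | hh q v hv =>
    obtain ⟨S, hS⟩ := V.L1_nilp q v hv
    choose N hN using fun i : ℕ => W.trunc ((V.L1 ^ i) v) w
    obtain ⟨B, hB⟩ : ∃ B : ℤ, ∀ i ∈ Finset.range S, N i ≤ B := by
      obtain ⟨B, hB⟩ := ((Finset.range S).image N).bddAbove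
      exact ⟨B, fun i hi => hB (by simpa using ⟨i, by simpa using hi, rfl⟩)⟩
    refine ⟨2 * q - S - 2 - B, fun k hk => ?_⟩
    rw [W.opp_hom q v hv k S hS, LinearMap.sum_apply]
    refine Finset.sum_eq_zero fun i hi => ?_
    rw [LinearMap.smul_apply, W.opL_apply, hN i _ ?_, smul_zero]
    have := hB i hi
    rw [Finset.mem_range] at hi
    omega
  | hadd u v hu hv =>
    obtain ⟨K, hK⟩ := hu
    obtain ⟨K', hK'⟩ := hv
    refine ⟨min K K', fun k hk => ?_⟩
    rw [W.opp_add, LinearMap.add_apply, hK k (hk.trans (min_le_left _ _)),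
      hK' k (hk.trans (min_le_right _ _)), add_zero]

theorem WeakModule.opp_one {V : VOA} (W : WeakModule V) (n : ℤ) (w : W.carrier) :
    W.opp V.one n w = if n = -1 then w else 0 := by
  rw [W.opp_hom 0 V.one V.one_wt n 1]
  · simp [W.opL_apply, W.one_op]
    congr 1
    simp only [eq_iff_iff]
    omega
  · intro s hs
    obtain ⟨t, rfl⟩ : ∃ t, s = t + 1 := ⟨s - 1, by omega⟩
    rw [pow_succ, Module.End.mul_apply, V.L1_apply, V.create_nonneg _ _ (by norm_num), map_zero]

theorem finsum_range {M : Type} [AddCommGroup M] (f : ℕ → M) (N : ℕ) (h : ∀ i, N ≤ i → f i = 0) :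
    ∑ᶠ i, f i = ∑ i ∈ Finset.range N, f i := by
  apply finsum_eq_sum_of_support_subset
  intro i hi
  by_contra hlt
  simp only [Finset.coe_range, Set.mem_Iio, not_lt] at hlt
  exact hi (h i hlt)

theorem WeakModule.borch_fin {V : VOA} (W : WeakModule V) (u v : V.carrier) (w : W.carrier)
    (l m n : ℤ) : ∃ N0 : ℕ, ∀ N : ℕ, N0 ≤ N →
    (∑ i ∈ Finset.range N, cchoose m i • W.op (V.op u (l + (i : ℤ)) v) (m + n - (i : ℤ)) w)
      = ∑ i ∈ Finset.range N, ((-1 : ℂ) ^ i * cchoose l i) •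
          (W.op u (l + m - (i : ℤ)) (W.op v (n + (i : ℤ)) w)
            - ((-1 : ℂ) ^ l) • W.op v (l + n - (i : ℤ)) (W.op u (m + (i : ℤ)) w)) := by
  obtain ⟨A, hA⟩ := V.trunc u v
  obtain ⟨B, hB⟩ := W.trunc v w
  obtain ⟨C, hC⟩ := W.trunc u w
  refine ⟨(A - l).toNat + (B - n).toNat + (C - m).toNat, fun N hN => ?_⟩
  have h := W.borcherds u v w l m n
  rw [finsum_range _ N, finsum_range _ N] at h
  · exact h
  · intro i hi
    rw [hB _ (by omega), hC _ (by omega), (W.op_linear_right _ _).map_zero,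
      (W.op_linear_right _ _).map_zero]
    simp
  · intro i hi
    rw [hA _ (by omega), (W.op_linear_left _ _).map_zero, smul_zero]

theorem neg_one_zpow_sq (l : ℤ) : (-1 : ℂ) ^ l * (-1 : ℂ) ^ l = 1 := by
  rw [← mul_zpow]; simp

theorem neg_one_zpow_inv (l : ℤ) : ((-1 : ℂ) ^ l)⁻¹ = (-1 : ℂ) ^ l := by
  rw [← inv_zpow]; norm_num

theorem sign_calc (p q l : ℤ) (i : ℕ) :
    (-1 : ℂ) ^ (p + q - (l + i) - 1) = -((-1 : ℂ) ^ l * (-1 : ℂ) ^ p * (-1 : ℂ) ^ q) * (-1) ^ i := by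
  have h : (-1 : ℂ) ≠ 0 := by norm_num
  rw [zpow_sub₀ h, zpow_sub₀ h, zpow_add₀ h, zpow_add₀ h, div_eq_mul_inv, div_eq_mul_inv, mul_inv,
    neg_one_zpow_inv l, neg_one_zpow_inv i, zpow_natCast]
  norm_num
  ring

theorem WeakModule.opp_lhs {V : VOA} (W : WeakModule V) (p q l m n : ℤ) (u v : V.carrier)
    (w : W.carrier)
    (hu : u ∈ V.wtSpace p) (hv : v ∈ V.wtSpace q) : ∃ N0 : ℕ, ∀ N : ℕ, N0 ≤ N →
    (∑ i ∈ Finset.range N, cchoose m i • W.opp (V.op u (l + (i : ℤ)) v) (m + n - (i : ℤ)) w)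
      = ∑ d ∈ Finset.range N, (-((-1 : ℂ) ^ l * (-1 : ℂ) ^ p * (-1 : ℂ) ^ q)) •
        W.opL (2 * p + 2 * q - 2 * l - m - n - 4 - d)
          (tsum3 d (fun i j k => cchoose (2 * p - l - m - k - 2) i • V.term u v l i j k)) w := by
  obtain ⟨B, hB⟩ := V.exists_bound
  refine ⟨(p + q - l - B).toNat, fun N hN => ?_⟩
  have hmem : ∀ i s : ℕ, (V.L1 ^ s) (V.op u (l + (i : ℤ)) v)
      ∈ V.wtSpace (p + q - (l + i) - 1 - s) := fun i s =>
    V.L1_pow_mem _ _ (V.op_wt p q (l + i) u hu v hv) s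
  have hz : ∀ i s : ℕ, N ≤ i + s → (V.L1 ^ s) (V.op u (l + (i : ℤ)) v) = 0 := fun i s h =>
    hB _ (by omega) _ (hmem i s)
  have h1 : ∀ i ∈ Finset.range N,
      cchoose m i • W.opp (V.op u (l + (i : ℤ)) v) (m + n - (i : ℤ)) w
      = ∑ s ∈ Finset.range N, (-((-1 : ℂ) ^ l * (-1 : ℂ) ^ p * (-1 : ℂ) ^ q)) •
        W.opL (2 * p + 2 * q - 2 * l - m - n - 4 - (i + s : ℕ))
         (((-1 : ℂ) ^ i * cchoose m i * (Nat.factorial s : ℂ)⁻¹) •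
          (V.L1 ^ s) (V.op u (l + i) v)) w := by
    intro i _
    rw [W.opp_hom _ _ (V.op_wt p q (l + i) u hu v hv) _ N (fun s hs => hz i s (by omega)),
      LinearMap.sum_apply, Finset.smul_sum]
    refine Finset.sum_congr rfl fun s _ => ?_
    have e : 2 * (p + q - (l + (i : ℤ)) - 1) - (m + n - (i : ℤ)) - (s : ℤ) - 2
      = 2 * p + 2 * q - 2 * l - m - n - 4 - (i + s : ℕ) := by push_cast; ring
    rw [e, sign_calc, LinearMap.smul_apply, map_smul, LinearMap.smul_apply, smul_smul, smul_smul]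
    congr 1
    ring
  rw [Finset.sum_congr rfl h1, range_ad N (fun i s => (-((-1 : ℂ) ^ l * (-1 : ℂ) ^ p * (-1 : ℂ) ^ q)) •
        W.opL (2 * p + 2 * q - 2 * l - m - n - 4 - (i + s : ℕ))
         (((-1 : ℂ) ^ i * cchoose m i * (Nat.factorial s : ℂ)⁻¹) •
          (V.L1 ^ s) (V.op u (l + i) v)) w)]
  · refine Finset.sum_congr rfl fun d _ => ?_
    rw [← V.key p l m u v hu d, map_sum, LinearMap.sum_apply, Finset.smul_sum]
    refine Finset.sum_congr rfl fun x hx => ?_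
    rw [Finset.HasAntidiagonal.mem_antidiagonal] at hx
    rw [hx]
  · intro i s h
    rw [hz i s h]
    simp

theorem WeakModule.opp_rhs {V : VOA} (W : WeakModule V) (p q l m n : ℤ) (u v : V.carrier)
    (w : W.carrier)
    (hu : u ∈ V.wtSpace p) (hv : v ∈ V.wtSpace q) : ∃ N0 : ℕ, ∀ N : ℕ, N0 ≤ N →
    (∑ i ∈ Finset.range N, ((-1 : ℂ) ^ i * cchoose l i) •
          (W.opp v (n + (i : ℤ)) (W.opp u (l + m - (i : ℤ)) w)
            - ((-1 : ℂ) ^ l) • W.opp u (m + (i : ℤ)) (W.opp v (l + n - (i : ℤ)) w)))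
      = ∑ d ∈ Finset.range N, (-((-1 : ℂ) ^ l * (-1 : ℂ) ^ p * (-1 : ℂ) ^ q)) •
        W.opL (2 * p + 2 * q - 2 * l - m - n - 4 - d)
          (tsum3 d (fun i j k => cchoose (2 * p - l - m - k - 2) i • V.term u v l i j k)) w := by
  obtain ⟨B, hB⟩ := V.exists_bound
  obtain ⟨S, hS⟩ := V.L1_nilp p u hu
  obtain ⟨T, hT⟩ := V.L1_nilp q v hv
  choose N1 hN1 using fun j k : ℕ => W.borch_fin ((V.L1 ^ k) u) ((V.L1 ^ j) v) w l
    (2 * p - l - m - k - 2) (2 * q - l - n - j - 2)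
  obtain ⟨C, hC⟩ := ((Finset.range T ×ˢ Finset.range S).image (fun x => N1 x.1 x.2)).bddAbove
  refine ⟨C + S + T + (p + q - l - B).toNat, fun N hN => ?_⟩
  have hbor : ∀ j k : ℕ,
    (∑ i ∈ Finset.range N, cchoose (2 * p - l - m - k - 2) i •
      W.op (V.op ((V.L1 ^ k) u) (l + (i : ℤ)) ((V.L1 ^ j) v))
        ((2 * p - l - m - k - 2) + (2 * q - l - n - j - 2) - (i : ℤ)) w)
      = ∑ i ∈ Finset.range N, ((-1 : ℂ) ^ i * cchoose l i) •
          (W.op ((V.L1 ^ k) u) (l + (2 * p - l - m - k - 2) - (i : ℤ))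
              (W.op ((V.L1 ^ j) v) ((2 * q - l - n - j - 2) + (i : ℤ)) w)
            - ((-1 : ℂ) ^ l) • W.op ((V.L1 ^ j) v) (l + (2 * q - l - n - j - 2) - (i : ℤ))
              (W.op ((V.L1 ^ k) u) ((2 * p - l - m - k - 2) + (i : ℤ)) w)) := by
    intro j k
    by_cases hjk : j < T ∧ k < S
    · refine hN1 j k N (le_trans (hC ?_) (by omega : C ≤ N))
      simp only [Finset.coe_image, Set.mem_image]
      exact ⟨(j, k), by simpa using hjk, rfl⟩
    · have : (V.L1 ^ j) v = 0 ∨ (V.L1 ^ k) u = 0 := by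
        by_cases hj : j < T
        · exact Or.inr (hS k (by omega))
        · exact Or.inl (hT j (by omega))
      simp only [← W.opL_apply, ← V.opL_apply]
      rcases this with h | h <;> simp [h]
  have hterm : ∀ i j k : ℕ, N ≤ i + j + k → V.term u v l i j k = 0 := by
    intro i j k h
    unfold VOA.term
    rw [hB _ _ _ (V.op_wt (p - k) (q - j) (l + i) _ (V.L1_pow_mem p u hu k) _
      (V.L1_pow_mem q v hv j)), smul_zero]
    omega
  have hou : ∀ a, W.opp u a = _ := fun a => W.opp_hom p u hu a N fun s hs => hS s (by omega)
  have hov : ∀ a, W.opp v a = _ := fun a => W.opp_hom q v hv a N fun s hs => hT s (by omega)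
  have h1 : ∀ i ∈ Finset.range N, ((-1 : ℂ) ^ i * cchoose l i) •
          (W.opp v (n + (i : ℤ)) (W.opp u (l + m - (i : ℤ)) w)
            - ((-1 : ℂ) ^ l) • W.opp u (m + (i : ℤ)) (W.opp v (l + n - (i : ℤ)) w))
      = ∑ j ∈ Finset.range N, ∑ k ∈ Finset.range N,
        (-((-1 : ℂ) ^ l * (-1 : ℂ) ^ p * (-1 : ℂ) ^ q) *
          ((Nat.factorial j : ℂ)⁻¹ * (Nat.factorial k : ℂ)⁻¹)) •
          (((-1 : ℂ) ^ i * cchoose l i) •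
          (W.op ((V.L1 ^ k) u) (l + (2 * p - l - m - k - 2) - (i : ℤ))
              (W.op ((V.L1 ^ j) v) ((2 * q - l - n - j - 2) + (i : ℤ)) w)
            - ((-1 : ℂ) ^ l) • W.op ((V.L1 ^ j) v) (l + (2 * q - l - n - j - 2) - (i : ℤ))
              (W.op ((V.L1 ^ k) u) ((2 * p - l - m - k - 2) + (i : ℤ)) w))) := by
    intro i _
    have a1 : W.opp v (n + (i : ℤ)) (W.opp u (l + m - (i : ℤ)) w) =
      ∑ j ∈ Finset.range N, ∑ k ∈ Finset.range N,
       ((-1 : ℂ) ^ p * (-1 : ℂ) ^ q * ((Nat.factorial j : ℂ)⁻¹ * (Nat.factorial k : ℂ)⁻¹)) •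
        W.op ((V.L1 ^ j) v) (l + (2 * q - l - n - j - 2) - (i : ℤ))
              (W.op ((V.L1 ^ k) u) ((2 * p - l - m - k - 2) + (i : ℤ)) w) := by
      rw [hou, hov, LinearMap.sum_apply]
      refine Finset.sum_congr rfl fun j _ => ?_
      rw [LinearMap.sum_apply, map_sum]
      refine Finset.sum_congr rfl fun k _ => ?_
      rw [LinearMap.smul_apply, LinearMap.smul_apply, map_smul, smul_smul, W.opL_apply,
        W.opL_apply]
      have e1 : 2 * q - (n + (i : ℤ)) - j - 2 = l + (2 * q - l - n - j - 2) - (i : ℤ) := by ring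
      have e2 : 2 * p - (l + m - (i : ℤ)) - k - 2 = (2 * p - l - m - k - 2) + (i : ℤ) := by ring
      rw [e1, e2]
      congr 1
      ring
    have a2 : W.opp u (m + (i : ℤ)) (W.opp v (l + n - (i : ℤ)) w) =
      ∑ j ∈ Finset.range N, ∑ k ∈ Finset.range N,
       ((-1 : ℂ) ^ p * (-1 : ℂ) ^ q * ((Nat.factorial j : ℂ)⁻¹ * (Nat.factorial k : ℂ)⁻¹)) •
        W.op ((V.L1 ^ k) u) (l + (2 * p - l - m - k - 2) - (i : ℤ))
              (W.op ((V.L1 ^ j) v) ((2 * q - l - n - j - 2) + (i : ℤ)) w) := by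
      rw [hou, hov, LinearMap.sum_apply, Finset.sum_comm]
      refine Finset.sum_congr rfl fun k _ => ?_
      rw [LinearMap.sum_apply, map_sum]
      refine Finset.sum_congr rfl fun j _ => ?_
      rw [LinearMap.smul_apply, LinearMap.smul_apply, map_smul, smul_smul, W.opL_apply,
        W.opL_apply]
      have e1 : 2 * q - (l + n - (i : ℤ)) - j - 2 = (2 * q - l - n - j - 2) + (i : ℤ) := by ring
      have e2 : 2 * p - (m + (i : ℤ)) - k - 2 = l + (2 * p - l - m - k - 2) - (i : ℤ) := by ring
      rw [e1, e2]
      congr 1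
      ring
    rw [a1, a2]
    simp only [Finset.smul_sum, ← Finset.sum_sub_distrib]
    refine Finset.sum_congr rfl fun j _ => Finset.sum_congr rfl fun k _ => ?_
    generalize W.op ((V.L1 ^ k) u) (l + (2 * p - l - m - k - 2) - (i : ℤ))
              (W.op ((V.L1 ^ j) v) ((2 * q - l - n - j - 2) + (i : ℤ)) w) = x
    generalize W.op ((V.L1 ^ j) v) (l + (2 * q - l - n - j - 2) - (i : ℤ))
              (W.op ((V.L1 ^ k) u) ((2 * p - l - m - k - 2) + (i : ℤ)) w) = y
    have hs := neg_one_zpow_sq l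
    generalize (-1 : ℂ) ^ l = ε at *
    generalize (-1 : ℂ) ^ p = εp at *
    generalize (-1 : ℂ) ^ q = εq at *
    match_scalars
    · linear_combination (-(-1 : ℂ) ^ i * cchoose l i * εp * εq *
        ((Nat.factorial j : ℂ)⁻¹ * (Nat.factorial k : ℂ)⁻¹)) * hs
    · ring
  rw [Finset.sum_congr rfl h1, Finset.sum_comm]
  have h2 : ∀ j ∈ Finset.range N, (∑ i ∈ Finset.range N, ∑ k ∈ Finset.range N,
        (-((-1 : ℂ) ^ l * (-1 : ℂ) ^ p * (-1 : ℂ) ^ q) *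
          ((Nat.factorial j : ℂ)⁻¹ * (Nat.factorial k : ℂ)⁻¹)) •
          (((-1 : ℂ) ^ i * cchoose l i) •
          (W.op ((V.L1 ^ k) u) (l + (2 * p - l - m - k - 2) - (i : ℤ))
              (W.op ((V.L1 ^ j) v) ((2 * q - l - n - j - 2) + (i : ℤ)) w)
            - ((-1 : ℂ) ^ l) • W.op ((V.L1 ^ j) v) (l + (2 * q - l - n - j - 2) - (i : ℤ))
              (W.op ((V.L1 ^ k) u) ((2 * p - l - m - k - 2) + (i : ℤ)) w))))
      = ∑ i ∈ Finset.range N, ∑ k ∈ Finset.range N,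
       (-((-1 : ℂ) ^ l * (-1 : ℂ) ^ p * (-1 : ℂ) ^ q)) •
        W.opL (2 * p + 2 * q - 2 * l - m - n - 4 - (i + j + k : ℕ))
          (cchoose (2 * p - l - m - k - 2) i • V.term u v l i j k) w := by
    intro j _
    rw [Finset.sum_comm, Finset.sum_comm (s := Finset.range N) (t := Finset.range N)
      (f := fun i k => (-((-1 : ℂ) ^ l * (-1 : ℂ) ^ p * (-1 : ℂ) ^ q)) •
        W.opL (2 * p + 2 * q - 2 * l - m - n - 4 - (i + j + k : ℕ))
          (cchoose (2 * p - l - m - k - 2) i • V.term u v l i j k) w)]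
    refine Finset.sum_congr rfl fun k _ => ?_
    rw [← Finset.smul_sum, ← hbor j k, Finset.smul_sum]
    refine Finset.sum_congr rfl fun i _ => ?_
    have e : (2 * p - l - m - k - 2) + (2 * q - l - n - j - 2) - (i : ℤ)
      = 2 * p + 2 * q - 2 * l - m - n - 4 - (i + j + k : ℕ) := by push_cast; ring
    rw [e]
    unfold VOA.term
    rw [map_smul, map_smul, LinearMap.smul_apply, LinearMap.smul_apply, W.opL_apply]
    module
  rw [Finset.sum_congr rfl h2, Finset.sum_comm, range_tsum3 N (fun i j k =>
      (-((-1 : ℂ) ^ l * (-1 : ℂ) ^ p * (-1 : ℂ) ^ q)) •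
        W.opL (2 * p + 2 * q - 2 * l - m - n - 4 - (i + j + k : ℕ))
          (cchoose (2 * p - l - m - k - 2) i • V.term u v l i j k) w)]
  · refine Finset.sum_congr rfl fun d _ => ?_
    rw [tsum3_map, ← LinearMap.applyₗ_apply_apply (R := ℂ) w, tsum3_map, tsum3_smul]
    refine tsum3_congr _ _ _ fun i j k h => ?_
    rw [h]
    rfl
  · intro i j k h
    rw [hterm i j k h]
    simp

theorem WeakModule.opp_borch {V : VOA} (W : WeakModule V) (l m n : ℤ) (w : W.carrier)
    (u v : V.carrier) : ∃ N0 : ℕ, ∀ N : ℕ, N0 ≤ N →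
    (∑ i ∈ Finset.range N, cchoose m i • W.opp (V.op u (l + (i : ℤ)) v) (m + n - (i : ℤ)) w)
      = ∑ i ∈ Finset.range N, ((-1 : ℂ) ^ i * cchoose l i) •
          (W.opp v (n + (i : ℤ)) (W.opp u (l + m - (i : ℤ)) w)
            - ((-1 : ℂ) ^ l) • W.opp u (m + (i : ℤ)) (W.opp v (l + n - (i : ℤ)) w)) := by
  induction u using V.hom_induction with
  | hh p u hu =>
    induction v using V.hom_induction with
    | hh q v hv =>
      obtain ⟨A, hA⟩ := W.opp_lhs p q l m n u v w hu hv
      obtain ⟨B, hB⟩ := W.opp_rhs p q l m n u v w hu hv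
      exact ⟨A + B, fun N hN => (hA N (by omega)).trans (hB N (by omega)).symm⟩
    | hadd a b ha hb =>
      obtain ⟨A, hA⟩ := ha
      obtain ⟨B, hB⟩ := hb
      refine ⟨A + B, fun N hN => ?_⟩
      have h := congrArg₂ (· + ·) (hA N (by omega)) (hB N (by omega))
      simp only [← Finset.sum_add_distrib] at h
      convert h using 2 with i _ i _
      · rw [(V.op_linear_right _ _).map_add, W.opp_add, LinearMap.add_apply, smul_add]
      · rw [W.opp_add, W.opp_add, LinearMap.add_apply, LinearMap.add_apply, map_add]
        module
  | hadd a b ha hb =>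
    obtain ⟨A, hA⟩ := ha
    obtain ⟨B, hB⟩ := hb
    refine ⟨A + B, fun N hN => ?_⟩
    have h := congrArg₂ (· + ·) (hA N (by omega)) (hB N (by omega))
    simp only [← Finset.sum_add_distrib] at h
    convert h using 2 with i _ i _
    · rw [(V.op_linear_left _ _).map_add, W.opp_add, LinearMap.add_apply, smul_add]
    · rw [W.opp_add, W.opp_add, LinearMap.add_apply, LinearMap.add_apply, map_add]
      module

theorem WeakModule.opp_zero {V : VOA} (W : WeakModule V) (n : ℤ) : W.opp 0 n = 0 := by
  have h := W.opp_add 0 0 n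
  rw [add_zero] at h
  simpa using h

theorem WeakModule.dmode_borch {V : VOA} (W : WeakModule V) (α : W.carrier →ₗ[ℂ] ℂ)
    (u v : V.carrier) (l m n : ℤ) (w : W.carrier) :
      (∑ᶠ i : ℕ, cchoose m i * W.dmode (V.op u (l + (i : ℤ)) v) (m + n - (i : ℤ)) α w)
        = ∑ᶠ i : ℕ, ((-1 : ℂ) ^ i * cchoose l i) *
            (W.dmode u (l + m - (i : ℤ)) (W.dmode v (n + (i : ℤ)) α) w
              - ((-1 : ℂ) ^ l) *
                  W.dmode v (l + n - (i : ℤ)) (W.dmode u (m + (i : ℤ)) α) w) := by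
  simp only [W.dmode_eq_fun, LinearMap.comp_apply]
  obtain ⟨N0, h0⟩ := W.opp_borch l m n w u v
  obtain ⟨A, hA⟩ := V.trunc u v
  obtain ⟨B, hB⟩ := W.opp_trunc u w
  obtain ⟨C, hC⟩ := W.opp_trunc v w
  let N := N0 + (A - l).toNat + (l + m - B).toNat + (l + n - C).toNat
  rw [finsum_range _ N, finsum_range _ N]
  · have h := congrArg α (h0 N (by omega))
    simpa only [map_sum, map_smul, map_sub, smul_eq_mul] using h
  · intro i hi
    rw [hB _ (by omega), hC _ (by omega)]
    simp
  · intro i hi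
    rw [hA _ (by omega), W.opp_zero]
    simp

theorem WeakModule.dmode_mem {V : VOA} (W : WeakModule V) (α : W.carrier →ₗ[ℂ] ℂ)
    (hα : (α : W.carrier → ℂ) ∈ W.DW) (v : V.carrier) (n : ℤ) : W.dmode v n α ∈ W.DW := by
  refine ⟨?_, fun u => ?_⟩
  · rw [W.dmode_eq_fun]
    exact LinearMap.isLinear _
  · obtain ⟨A, hA⟩ := V.trunc u v
    choose K hK using fun i : ℕ => hα.2 (V.op u (i : ℤ) v)
    obtain ⟨M, hM⟩ := hα.2 u
    obtain ⟨B, hB⟩ : ∃ B : ℤ, ∀ i ∈ Finset.range A.toNat, K i ≤ B := by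
      obtain ⟨B, hB⟩ := ((Finset.range A.toNat).image K).bddAbove
      exact ⟨B, fun i hi => hB (by simpa using ⟨i, by simpa using hi, rfl⟩)⟩
    refine ⟨max M (B - n + A.toNat), fun m hm w => ?_⟩
    have h := W.dmode_borch α u v 0 m n w
    rw [finsum_range _ A.toNat, finsum_range _ 1] at h
    · rw [Finset.sum_eq_zero] at h
      · have h2 : W.dmode u m α = (0 : W.carrier →ₗ[ℂ] ℂ) := by
          funext w'
          exact hM m (by omega) w'
        simp only [Finset.range_one, Finset.sum_singleton, cch_zero] at h
        norm_num at h
        rw [h2, W.dmode_eq] at h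
        simpa using h.symm
      · intro i hi
        have := hB i hi
        rw [Finset.mem_range] at hi
        rw [zero_add, hK i _ (by omega), mul_zero]
    · intro i hi
      obtain ⟨j, rfl⟩ : ∃ j, i = j + 1 := ⟨i - 1, by omega⟩
      rw [cch_zero_succ]; simp
    · intro i hi
      rw [hA _ (by omega), W.dmode_eq, W.opp_zero]
      simp

/-- `(D(W), Y*)` is a weak `V`-module: `D(W)` is stable under all the
operators `v*ₙ`, the vacuum acts as the identity (`Y*(1,x) = id`), truncation holds by
definition, and the Jacobi identity (in Borcherds component form) holds for `Y*` on
`D(W)`.  Moreover `D(W)` is the maximal weak `V`-module inside `W*` with vertex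
operator map `Y*`: any subset `M ⊆ W*` of linear functionals on which `Y*` is truncated
(as it must be for a weak module structure with vertex operator map `Y*`) is contained
in `D(W)`. -/
theorem DW_weak_module_and_maximal (V : VOA) (W : WeakModule V) :
    (∀ α ∈ W.DW, ∀ (v : V.carrier) (n : ℤ), W.dmode v n α ∈ W.DW) ∧
    (∀ α ∈ W.DW, ∀ (n : ℤ) (w : W.carrier),
      W.dmode V.one n α w = if n = -1 then α w else 0) ∧
    (∀ α ∈ W.DW, ∀ (u v : V.carrier) (l m n : ℤ) (w : W.carrier),
      (∑ᶠ i : ℕ, cchoose m i * W.dmode (V.op u (l + (i : ℤ)) v) (m + n - (i : ℤ)) α w)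
        = ∑ᶠ i : ℕ, ((-1 : ℂ) ^ i * cchoose l i) *
            (W.dmode u (l + m - (i : ℤ)) (W.dmode v (n + (i : ℤ)) α) w
              - ((-1 : ℂ) ^ l) *
                  W.dmode v (l + n - (i : ℤ)) (W.dmode u (m + (i : ℤ)) α) w)) ∧
    (∀ M : Set (W.carrier → ℂ), (∀ α ∈ M, IsLinearMap ℂ α) →
      (∀ α ∈ M, ∀ v : V.carrier, ∃ N : ℤ, ∀ n : ℤ, N ≤ n →
        ∀ w : W.carrier, W.dmode v n α w = 0) →
      M ⊆ W.DW) := by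
  refine ⟨?_, ?_, ?_, ?_⟩
  · intro α hα v n
    exact W.dmode_mem (IsLinearMap.mk' α hα.1) hα v n
  · intro α hα n w
    have h := W.dmode_eq V.one n (IsLinearMap.mk' α hα.1) w
    rw [W.opp_one] at h
    refine h.trans ?_
    split_ifs
    · rfl
    · exact hα.1.map_zero
  · intro α hα u v l m n w
    exact W.dmode_borch (IsLinearMap.mk' α hα.1) u v l m n w
  · intro M h1 h2 α hα
    exact ⟨h1 α hα, h2 α hα⟩
end

section
/- Let V be a vertex operator algebra and W an ordinary V-module. Then D(W)⁰ = W′; that is, for each h ∈ ℂ the L(0)-eigenspace D(W)_{(h)} of eigenvalue h equals W_{(h)}*, so the sum of the L(0)-eigenspaces of D(W) coincides with the restricted dual W′ = ⊕_{h∈ℂ} W_{(h)}*. -/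
theorem OrdModule.lin_ext {V : VOA} (W : OrdModule V) {T U : W.carrier → ℂ}
    (hT : IsLinearMap ℂ T) (hU : IsLinearMap ℂ U)
    (h : ∀ g : ℂ, ∀ w ∈ W.wt g, T w = U w) (w : W.carrier) : T w = U w := by
  have h1 := W.projW_sum w
  rw [finsum_eq_sum _ (W.projW_finite w)] at h1
  have e : hT.mk' T w = hU.mk' U w := by
    rw [← h1, map_sum, map_sum]
    exact Finset.sum_congr rfl fun g _ => h g _ (W.projW_mem g w)
  exact e

theorem VOA.L1_iter_wt (V : VOA) (k : ℤ) (i : ℕ) (v : V.carrier) (hv : v ∈ V.wtSpace k) :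
    (V.L 1)^[i] v ∈ V.wtSpace (k - (i : ℤ)) := by
  induction i with
  | zero => simpa using hv
  | succ i ih =>
    rw [Function.iterate_succ_apply']
    have := V.op_wt 2 (k - i) 2 V.omega V.omega_wt _ ih
    have e : (2 : ℤ) + (k - i) - 2 - 1 = k - ((i + 1 : ℕ) : ℤ) := by push_cast; ring
    rw [e] at this
    exact this

theorem OrdModule.comp_proj_linear {V : VOA} (W : OrdModule V) {α : W.carrier → ℂ}
    (hα : IsLinearMap ℂ α) (h : ℂ) : IsLinearMap ℂ (fun w => α (W.projW h w)) :=
  ((hα.mk' α).comp ((W.projW_linear h).mk' _)).isLinear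

theorem OrdModule.comp_proj_mem {V : VOA} (W : OrdModule V) {α : W.carrier → ℂ}
    (hα : IsLinearMap ℂ α) (h : ℂ) : (fun w => α (W.projW h w)) ∈ W.toWeakModule.DW := by
  refine ⟨W.comp_proj_linear hα h, fun v => ?_⟩
  obtain ⟨N, hN⟩ := W.wt_lower h
  obtain ⟨B, hB⟩ := (V.proj_finite v).bddAbove
  have a0 : α 0 = 0 := hα.map_zero
  refine ⟨B - 1 - N, fun n hn w => ?_⟩
  unfold WeakModule.dmode
  refine (finsum_congr fun k => (finsum_congr fun i => ?_).trans finsum_zero).trans finsum_zero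
  refine mul_eq_zero_of_right _ ?_
  have hu := V.L1_iter_wt k i _ (V.proj_mem k v)
  have hz : V.proj k v = 0 → (V.L 1)^[i] (V.proj k v) = 0 := by
    intro h0
    rw [h0]
    exact Function.iterate_fixed (V.op_linear_right _ _).map_zero i
  generalize (V.L 1)^[i] (V.proj k v) = u at hu hz
  by_cases hk : V.proj k v = 0
  · rw [hz hk, (W.op_linear_left _ w).map_zero]
    exact (W.comp_proj_linear hα h).map_zero
  have hkB : k ≤ B := hB (Function.mem_support.2 hk)
  refine W.lin_ext
    (T := fun w => α (W.projW h (W.op u (2 * k - n - (i : ℤ) - 2) w))) (U := fun _ => 0)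
    ((((W.comp_proj_linear hα h).mk' _).comp
      ((W.op_linear_right u (2 * k - n - (i : ℤ) - 2)).mk' _)).isLinear)
    (0 : W.carrier →ₗ[ℂ] ℂ).isLinear (fun g w hw => ?_) w
  have hm := W.wt_op _ u hu g (2 * k - n - (i : ℤ) - 2) w hw
  show α (W.projW h (W.op u (2 * k - n - (i : ℤ) - 2) w)) = 0
  by_cases hg : g = h + ((k - n - 1 : ℤ) : ℂ)
  · have hb := hN (k - n - 1) (by omega)
    rw [hg, hb, Submodule.mem_bot] at hw
    rw [hw, (W.op_linear_right _ _).map_zero, (W.projW_linear h).map_zero, a0]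
  · rw [W.projW_ne _ h _ _ hm, a0]
    intro e
    apply hg
    rw [← e]
    push_cast
    ring

/-- For an ordinary `V`-module `W`, `D(W)⁰ = W'`: the sum of the
`L(0)`-eigenspaces of the weak module `D(W) ⊆ W*` equals the restricted dual
`W' = ⊕_{h∈ℂ} W₍ₕ₎*`. -/
theorem DW0_eq_restricted_dual (V : VOA) (W : OrdModule V) :
    W.DW0 = W.toGenModule.restrictedDual := by
  ext α
  constructor
  · rintro ⟨S, f, hf, rfl⟩
    constructor
    · have : IsLinearMap ℂ (∑ h ∈ S, f h) := by
        constructor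
        · intro x y
          simp only [Finset.sum_apply, ← Finset.sum_add_distrib]
          exact Finset.sum_congr rfl fun h hh => (hf h hh).1.1.map_add x y
        · intro c x
          simp only [Finset.sum_apply, Finset.smul_sum]
          exact Finset.sum_congr rfl fun h hh => (hf h hh).1.1.map_smul c x
      exact this
    · refine S.finite_toSet.subset ?_
      rintro g ⟨w, hw, hne⟩
      by_contra hg
      apply hne
      rw [Finset.sum_apply]
      refine Finset.sum_eq_zero fun h hh => ?_
      have h1 := (hf h hh).2 w
      rw [W.wt_L0 g w hw, (hf h hh).1.1.map_smul, smul_eq_mul] at h1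
      have h2 : g - h ≠ 0 := sub_ne_zero.2 fun e => hg (e ▸ hh)
      exact (mul_eq_zero.1 (show (g - h) * f h w = 0 by rw [sub_mul, h1, sub_self])).resolve_left h2
  · rintro ⟨hα, hfin⟩
    refine ⟨hfin.toFinset, fun h w => α (W.projW h w), fun h _ => ⟨W.comp_proj_mem hα h, ?_⟩, ?_⟩
    · have a0 : α 0 = 0 := hα.map_zero
      refine W.lin_ext (U := fun w => h * α (W.projW h w))
        (((W.comp_proj_linear hα h).mk' _).comp
          ((W.op_linear_right V.omega 1).mk' _)).isLinear
        (h • ((W.comp_proj_linear hα h).mk' _)).isLinear ?_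
      intro g w hw
      show α (W.projW h (W.op V.omega 1 w)) = h * α (W.projW h w)
      rw [W.wt_L0 g w hw, (W.projW_linear h).map_smul, hα.map_smul, smul_eq_mul]
      by_cases hg : g = h
      · rw [hg]
      · rw [W.projW_ne g h hg w hw, a0, mul_zero, mul_zero]
    · funext w
      rw [Finset.sum_apply]
      refine W.lin_ext (U := fun w => ∑ h ∈ hfin.toFinset, α (W.projW h w)) hα ?_ ?_ w
      · constructor
        · intro x y
          simp only [← Finset.sum_add_distrib]
          exact Finset.sum_congr rfl fun h _ => (W.comp_proj_linear hα h).map_add x y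
        · intro c x
          simp only [Finset.smul_sum]
          exact Finset.sum_congr rfl fun h _ => (W.comp_proj_linear hα h).map_smul c x
      · intro g w hw
        have a0 : α 0 = 0 := hα.map_zero
        show α w = ∑ h ∈ hfin.toFinset, α (W.projW h w)
        rw [Finset.sum_eq_single g]
        · rw [W.projW_eq g w hw]
        · intro h _ hne
          rw [W.projW_ne g h hne.symm w hw, a0]
        · intro hg
          rw [W.projW_eq g w hw]
          by_contra hne
          exact hg (hfin.mem_toFinset.2 ⟨w, hw, hne⟩)
end
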